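/- arXiv:2312.10433 — 4 statements merged into one kernel-verified Lean document; each statement's English description precedes it below -/
import Mathlib

section
/- Let d ≥ 3, let I = I_3(H) ⊆ ℂ[m_0,…,m_d], and let x ∈ ℂ^{d+1} be a nonzero point at which every 3×3 minor of H vanishes. Let J(x) be the Jacobian matrix whose rows are indexed by the 3-element subsets {i < j < k} of the column set {1,…,d}, whose columns are indexed by l = 0,…,d, and whose ({i,j,k}, l) entry is the partial derivative with respect to m_l of the 3×3 minor of H on columns i,j,k, evaluated at x. Then the rank of J(x) over ℂ is strictly less than d−2 if and only if either x_0 = x_1 = ⋯ = x_{d−2} = 0 or x_1 = x_2 = ⋯ = x_d = 0. (Equivalently: the singular locus of the projective inverse Gaussian moment variety M_d^IG ⊆ ℙ^d is the line m_0 = m_1 = ⋯ = m_{d−2} = 0 together with the point m_1 = m_2 = ⋯ = m_d = 0.) -/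
open MvPolynomial

/-- The `3 × d` matrix `H` of the inverse Gaussian moment variety: its first column is
`(m₀², 0, m₁²)ᵀ`, and its `c`-th column, for `2 ≤ c ≤ d`, is
`(m_{c-2}, (2c-3)·m_{c-1}, m_c)ᵀ`.  Columns are indexed by `Fin d`, with `c : Fin d`
corresponding to the paper's column `c + 1`. -/
noncomputable def invGaussMatrix (d : ℕ) :
    Matrix (Fin 3) (Fin d) (MvPolynomial (Fin (d + 1)) ℂ) :=
  Matrix.of fun r c =>
    if c.val = 0 then
      ![X ⟨0, by omega⟩ ^ 2, 0, X ⟨1, by have := c.isLt; omega⟩ ^ 2] r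
    else
      ![X ⟨c.val - 1, by have := c.isLt; omega⟩,
        C (2 * (c.val : ℂ) - 1) * X ⟨c.val, by have := c.isLt; omega⟩,
        X ⟨c.val + 1, by have := c.isLt; omega⟩] r

/-- The ideal `I₃(H)` generated by all `3 × 3` minors of `H`, i.e. determinants of
submatrices obtained by choosing `3` of the `d` columns. -/
noncomputable def invGaussIdeal (d : ℕ) : Ideal (MvPolynomial (Fin (d + 1)) ℂ) :=
  Ideal.span
    { p | ∃ s : Fin 3 → Fin d, StrictMono s ∧ p = ((invGaussMatrix d).submatrix id s).det }

set_option linter.unusedSimpArgs false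

namespace IGAux

/-- Extension by zero of a point to a sequence. -/
noncomputable def ext0 {n : ℕ} (x : Fin n → ℂ) (i : ℕ) : ℂ :=
  if h : i < n then x ⟨i, h⟩ else 0

/-- Entries of `H` at a point. -/
noncomputable def A (X : ℕ → ℂ) (r : Fin 3) (c : ℕ) : ℂ :=
  if c = 0 then ![X 0 ^ 2, 0, X 1 ^ 2] r
  else ![X (c - 1), (2 * (c : ℂ) - 1) * X c, X (c + 1)] r

/-- Entries of the partial derivatives of `H` at a point. -/
noncomputable def D (X : ℕ → ℂ) (l : ℕ) (r : Fin 3) (c : ℕ) : ℂ :=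
  if c = 0 then ![if l = 0 then 2 * X 0 else 0, 0, if l = 1 then 2 * X 1 else 0] r
  else ![if l = c - 1 then 1 else 0, if l = c then (2 * (c : ℂ) - 1) else 0,
    if l = c + 1 then 1 else 0] r

lemma eval_H {d : ℕ} (x : Fin (d + 1) → ℂ) (r : Fin 3) (c : Fin d) :
    eval x (invGaussMatrix d r c) = A (ext0 x) r c := by
  have hc := c.isLt
  have h0 : (c : ℕ) - 1 < d + 1 := by omega
  have h1 : (1 : ℕ) < d + 1 := by omega
  have h2 : (c : ℕ) < d + 1 := by omega
  by_cases h : (c : ℕ) = 0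
  · fin_cases r <;> simp [invGaussMatrix, A, ext0, h] <;> (intros; omega)
  · fin_cases r <;> simp [invGaussMatrix, A, ext0, h, h0, h1, h2]

lemma eval_dH {d : ℕ} (x : Fin (d + 1) → ℂ) (l : Fin (d + 1)) (r : Fin 3) (c : Fin d) :
    eval x (pderiv l (invGaussMatrix d r c)) = D (ext0 x) l r c := by
  have hc := c.isLt
  have h0 : (c : ℕ) - 1 < d + 1 := by omega
  have h1 : (1 : ℕ) < d + 1 := by omega
  have h2 : (c : ℕ) < d + 1 := by omega
  have key : ∀ (i : ℕ) (hi : i < d + 1),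
      eval x (pderiv l (X ⟨i, hi⟩ : MvPolynomial (Fin (d + 1)) ℂ)) = if (l : ℕ) = i then 1 else 0 := by
    intro i hi
    rw [pderiv_X, Pi.single_apply]
    by_cases h : (l : ℕ) = i
    · rw [if_pos (Fin.ext (by simp [h])), if_pos h]; simp
    · rw [if_neg, if_neg h]
      · simp
      · intro h'; apply h; rw [← h']
  by_cases h : (c : ℕ) = 0
  · fin_cases r
    · simp only [invGaussMatrix, D, ext0, h, Matrix.of_apply, if_true]
      simp only [Fin.zero_eta, Matrix.cons_val_zero, pow_two, Derivation.leibniz, smul_eq_mul, map_add, map_mul, key, eval_X]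
      split_ifs <;> simp_all <;> ring
    · simp [invGaussMatrix, D, h]
    · simp only [invGaussMatrix, D, ext0, h, Matrix.of_apply, if_true]
      simp [pow_two, Derivation.leibniz, key, h1, -pderiv_X]
      split_ifs <;> simp_all <;> (try ring) <;> (try omega)
  · fin_cases r
    · simp [invGaussMatrix, D, h, key, -pderiv_X]
    · simp [invGaussMatrix, D, h, key, -pderiv_X, Derivation.leibniz]
    · simp [invGaussMatrix, D, h, key, -pderiv_X]

/-- cross product of columns -/
noncomputable def W (X : ℕ → ℂ) (p q : ℕ) : Fin 3 → ℂ :=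
  ![A X 1 p * A X 2 q - A X 2 p * A X 1 q,
    A X 2 p * A X 0 q - A X 0 p * A X 2 q,
    A X 0 p * A X 1 q - A X 1 p * A X 0 q]

noncomputable def det3 (a b c : Fin 3 → ℂ) : ℂ :=
  a 0 * (b 1 * c 2 - b 2 * c 1) + a 1 * (b 2 * c 0 - b 0 * c 2) + a 2 * (b 0 * c 1 - b 1 * c 0)

noncomputable def T (X : ℕ → ℂ) (l i j k : ℕ) : ℂ :=
  det3 (D X l · i) (A X · j) (A X · k) + det3 (A X · i) (D X l · j) (A X · k)
    + det3 (A X · i) (A X · j) (D X l · k)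

lemma eval_det {d : ℕ} (x : Fin (d + 1) → ℂ) (s : Fin 3 → Fin d) :
    eval x (((invGaussMatrix d).submatrix id s).det) =
      det3 (A (ext0 x) · (s 0)) (A (ext0 x) · (s 1)) (A (ext0 x) · (s 2)) := by
  simp only [Matrix.det_fin_three, Matrix.submatrix_apply, id, map_add, map_sub, map_mul, eval_H, det3]
  ring

lemma eval_ddet {d : ℕ} (x : Fin (d + 1) → ℂ) (l : Fin (d + 1)) (s : Fin 3 → Fin d) :
    eval x (pderiv l (((invGaussMatrix d).submatrix id s).det)) =
      T (ext0 x) l (s 0) (s 1) (s 2) := by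
  simp only [Matrix.det_fin_three, Matrix.submatrix_apply, id, map_add, map_sub, map_mul,
    Derivation.leibniz, smul_eq_mul, eval_H, eval_dH, det3, T]
  ring

/-- The Jacobian. -/
noncomputable def J (d : ℕ) (X : ℕ → ℂ) : Matrix {s : Fin 3 → Fin d // StrictMono s} (Fin (d + 1)) ℂ :=
  Matrix.of fun s l => T X l (s.1 0) (s.1 1) (s.1 2)

lemma sm {d : ℕ} {i j k : Fin d} (h : i < j) (h' : j < k) : StrictMono ![i, j, k] := by
  rw [Fin.strictMono_iff_lt_succ]
  intro a
  fin_cases a <;> simp [h, h']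

lemma T_mem {d : ℕ} (X : ℕ → ℂ) (k p q : Fin d) (hpq : p < q) :
    (fun l : Fin (d + 1) => T X l k p q) ∈ Submodule.span ℂ (Set.range (J d X).row) := by
  rcases lt_trichotomy k p with h | h | h
  · exact Submodule.subset_span ⟨⟨_, sm h hpq⟩, by ext l; simp [J, Matrix.row]⟩
  · subst h
    have : (fun l : Fin (d + 1) => T X l k k q) = 0 := by
      ext l; simp only [T, det3, Pi.zero_apply]; ring
    rw [this]; exact Submodule.zero_mem _
  · rcases lt_trichotomy k q with h' | h' | h'
    · have : (fun l : Fin (d + 1) => T X l k p q) = - (J d X).row ⟨_, sm h h'⟩ := by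
        ext l; simp [J, Matrix.row, T, det3]; ring
      rw [this]
      exact Submodule.neg_mem _ (Submodule.subset_span ⟨_, rfl⟩)
    · subst h'
      have : (fun l : Fin (d + 1) => T X l k p k) = 0 := by
        ext l; simp only [T, det3, Pi.zero_apply]; ring
      rw [this]; exact Submodule.zero_mem _
    · have : (fun l : Fin (d + 1) => T X l k p q) = (J d X).row ⟨_, sm hpq h'⟩ := by
        ext l; simp [J, Matrix.row, T, det3]; ring
      rw [this]
      exact Submodule.subset_span ⟨_, rfl⟩

/-- `3 × d` matrix at a point. -/
noncomputable def AM (d : ℕ) (X : ℕ → ℂ) : Matrix (Fin 3) (Fin d) ℂ := Matrix.of fun r c => A X r c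

/-- The matrix of `w · dH`. -/
noncomputable def LM (d : ℕ) (X : ℕ → ℂ) (w : Fin 3 → ℂ) : Matrix (Fin d) (Fin (d + 1)) ℂ :=
  Matrix.of fun c l => w 0 * D X l 0 c + w 1 * D X l 1 c + w 2 * D X l 2 c

lemma L_mem {d : ℕ} (X : ℕ → ℂ) (p q : Fin d) (hpq : p < q) (u : Fin d → ℂ)
    (hu : (AM d X).mulVec u = 0) :
    Matrix.vecMul u (LM d X (W X p q)) ∈ Submodule.span ℂ (Set.range (J d X).row) := by
  have : Matrix.vecMul u (LM d X (W X p q)) = ∑ k : Fin d, u k • (fun l : Fin (d + 1) => T X l k p q) := by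
    ext l
    have e : ∀ r, ∑ k : Fin d, A X r k * u k = 0 := fun r => congrFun hu r
    simp only [Matrix.vecMul, dotProduct, Finset.sum_apply, Pi.smul_apply, smul_eq_mul]
    rw [← sub_eq_zero, ← Finset.sum_sub_distrib]
    have : ∀ k : Fin d, u k * LM d X (W X p q) k l - u k * T X l k p q =
        (A X 0 k * u k) * (-(D X l 1 p * A X 2 q - D X l 2 p * A X 1 q) - (A X 1 p * D X l 2 q - A X 2 p * D X l 1 q))
        + (A X 1 k * u k) * (-(D X l 2 p * A X 0 q - D X l 0 p * A X 2 q) - (A X 2 p * D X l 0 q - A X 0 p * D X l 2 q))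
        + (A X 2 k * u k) * (-(D X l 0 p * A X 1 q - D X l 1 p * A X 0 q) - (A X 0 p * D X l 1 q - A X 1 p * D X l 0 q)) := by
      intro k
      simp [LM, W, T, det3]; ring
    simp only [this, Finset.sum_add_distrib, ← Finset.sum_mul, e]
    ring
  rw [this]
  exact Submodule.sum_mem _ fun k _ => Submodule.smul_mem _ _ (T_mem X k p q hpq)

lemma rank_ge {d : ℕ} (X : ℕ → ℂ) (p q : Fin d) (hpq : p < q) (hw : W X p q ≠ 0)
    (hk : ∀ c : Fin d, W X p q 0 * A X 0 c + W X p q 1 * A X 1 c + W X p q 2 * A X 2 c = 0)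
    (hinj : ∀ u : Fin d → ℂ, (AM d X).mulVec u = 0 → Matrix.vecMul u (LM d X (W X p q)) = 0 → u = 0) :
    d - 2 ≤ (J d X).rank := by
  rw [Matrix.rank_eq_finrank_span_row]
  let K := LinearMap.ker (AM d X).mulVecLin
  let f : K →ₗ[ℂ] (Fin (d + 1) → ℂ) := (Matrix.vecMulLinear (LM d X (W X p q))).comp K.subtype
  have hf : Function.Injective f := by
    rw [← LinearMap.ker_eq_bot, LinearMap.ker_eq_bot']
    intro u hu
    exact Subtype.ext (hinj u.1 u.2 hu)
  have hr : LinearMap.range f ≤ Submodule.span ℂ (Set.range (J d X).row) := by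
    rintro _ ⟨u, rfl⟩
    exact L_mem X p q hpq u.1 u.2
  have h1 := Submodule.finrank_mono hr
  rw [LinearMap.finrank_range_of_inj hf] at h1
  refine le_trans ?_ h1
  have h2 := LinearMap.finrank_range_add_finrank_ker (AM d X).mulVecLin
  have h3 : (AM d X).rank ≤ 2 := by
    rw [← Matrix.rank_transpose]
    have h4 := LinearMap.finrank_range_add_finrank_ker (AM d X).transpose.mulVecLin
    have h5 : 0 < Module.finrank ℂ (LinearMap.ker (AM d X).transpose.mulVecLin) := by
      rw [Module.finrank_pos_iff_exists_ne_zero]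
      refine ⟨⟨W X p q, ?_⟩, fun h => hw (congrArg Subtype.val h)⟩
      rw [LinearMap.mem_ker]
      ext c
      have := hk c
      simp only [Matrix.mulVecLin_apply, Matrix.mulVec, dotProduct, Fin.sum_univ_three, Matrix.transpose_apply, AM, Matrix.of_apply, Pi.zero_apply]
      linear_combination this
    simp only [Module.finrank_fin_fun] at h4
    unfold Matrix.rank
    omega
  simp only [Module.finrank_fin_fun] at h2
  unfold Matrix.rank at h3
  change d - 2 ≤ Module.finrank ℂ (LinearMap.ker (AM d X).mulVecLin)
  omega

/-- Column equations. -/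
lemma col_eq {d : ℕ} (hd : 3 ≤ d) (X : ℕ → ℂ) (w : Fin 3 → ℂ) (u : Fin d → ℂ)
    (h : Matrix.vecMul u (LM d X w) = 0) (l : ℕ) (hl : l ≤ d) :
    (if l = 0 then 2 * X 0 * w 0 * ext0 u 0 else 0) + (if l = 1 then 2 * X 1 * w 2 * ext0 u 0 else 0)
      + w 0 * ext0 u (l + 1) + (if 1 ≤ l then w 1 * (2 * (l : ℂ) - 1) * ext0 u l else 0)
      + (if 2 ≤ l then w 2 * ext0 u (l - 1) else 0) = 0 := by
  have h1 := congrFun h ⟨l, by omega⟩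
  simp only [Matrix.vecMul, dotProduct, LM, Matrix.of_apply, Pi.zero_apply] at h1
  have h2 : ∀ c : Fin d, u c * (w 0 * D X l 0 c + w 1 * D X l 1 c + w 2 * D X l 2 c) =
      (fun c : ℕ => ext0 u c * (w 0 * D X l 0 c + w 1 * D X l 1 c + w 2 * D X l 2 c)) c := by
    intro c; simp [ext0]
  rw [Finset.sum_congr rfl (fun c _ => h2 c),
    Fin.sum_univ_eq_sum_range (fun c : ℕ => ext0 u c * (w 0 * D X l 0 c + w 1 * D X l 1 c + w 2 * D X l 2 c)) d] at h1
  have h3 : ∀ c ∈ Finset.range d, ext0 u c * (w 0 * D X l 0 c + w 1 * D X l 1 c + w 2 * D X l 2 c)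
      = (if c = 0 then (if l = 0 then 2 * X 0 * w 0 * ext0 u 0 else 0) + (if l = 1 then 2 * X 1 * w 2 * ext0 u 0 else 0) else 0)
        + (if c = l + 1 then w 0 * ext0 u (l + 1) else 0)
        + (if c = l then (if 1 ≤ l then w 1 * (2 * (l : ℂ) - 1) * ext0 u l else 0) else 0)
        + (if c = l - 1 then (if 2 ≤ l then w 2 * ext0 u (l - 1) else 0) else 0) := by
    intro c _
    rcases c with _ | c
    · rcases l with _ | _ | l
      · simp [D]; ring
      · simp [D]; ring
      · simp [D]
    · have e : (l = c + 1 - 1) ↔ (c + 1 = l + 1) := by omega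
      have e2 : (l = c + 1) ↔ (c + 1 = l) := by omega
      simp only [D, Nat.add_eq_zero_iff, one_ne_zero, and_false, if_false, Matrix.cons_val_zero, Matrix.cons_val_one, Matrix.cons_val, e, e2]
      by_cases a1 : l = c
      · subst a1
        have : ¬ (l + 1 = l - 1) := by omega
        have this2 : ¬ (l = l + 1 + 1) := by omega
        simp [this, this2]; ring
      by_cases a2 : l = c + 1
      · subst a2
        simp; ring
      by_cases a3 : l = c + 2
      · subst a3
        simp; ring
      have b1 : ¬ (c + 1 = l + 1) := by omega
      have b2 : ¬ (c + 1 = l) := by omega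
      have b3 : ¬ (c + 1 + 1 = l) := by omega
      have b4 : ¬ (c + 1 = l - 1) := by clear e e2; omega
      have b6 : ¬ (c = l) := by clear e e2; omega
      have b5 : ¬ (l = c + 1 + 1) := by omega
      simp [b1, b2, b3, b4, b5, b6, a1]
  have z : ∀ i, d ≤ i → ext0 u i = 0 := by
    intro i hi; simp [ext0]; intro; omega
  rw [Finset.sum_congr rfl h3] at h1
  simp only [Finset.sum_add_distrib, Finset.sum_ite_eq', Finset.mem_range] at h1
  rw [if_pos (show 0 < d by omega), if_pos (show l - 1 < d by omega)] at h1
  have h4 : (if l + 1 < d then w 0 * ext0 u (l + 1) else 0) = w 0 * ext0 u (l + 1) := by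
    split_ifs with g
    · rfl
    · rw [z _ (by omega)]; simp
  have h5 : (if l < d then (if 1 ≤ l then w 1 * (2 * (l : ℂ) - 1) * ext0 u l else 0) else 0) = (if 1 ≤ l then w 1 * (2 * (l : ℂ) - 1) * ext0 u l else 0) := by
    split_ifs with g
    · rfl
    · rfl
    · rw [z _ (by omega)]; simp
    · rfl
  rw [h4, h5] at h1
  exact h1

lemma odd_ne (l : ℕ) : (2 * (l : ℂ) - 1) ≠ 0 := by
  intro h
  have h' : ((2 * (l : ℤ) - 1 : ℤ) : ℂ) = 0 := by push_cast; exact h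
  have := Int.cast_eq_zero.1 h'
  omega

lemma inj {d : ℕ} (hd : 3 ≤ d) (X : ℕ → ℂ) (w : Fin 3 → ℂ) (hw : w ≠ 0)
    (hk : ∀ c < d, w 0 * A X 0 c + w 1 * A X 1 c + w 2 * A X 2 c = 0)
    (hline : ¬ ∀ i ≤ d - 2, X i = 0) (hpt : ¬ ∀ i, 1 ≤ i → i ≤ d → X i = 0)
    (u : Fin d → ℂ) (hu : (AM d X).mulVec u = 0) (hL : Matrix.vecMul u (LM d X w) = 0) : u = 0 := by
  have E0 : w 0 * X 0 ^ 2 + w 2 * X 1 ^ 2 = 0 := by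
    have := hk 0 (by omega)
    simpa [A] using this
  have E : ∀ c, c + 1 < d → w 0 * X c + w 1 * (2 * ((c + 1 : ℕ) : ℂ) - 1) * X (c + 1) + w 2 * X (c + 2) = 0 := by
    intro c hc
    have := hk (c + 1) hc
    simp [A] at this
    push_cast
    linear_combination this
  have Q := col_eq hd X w u hL
  suffices H : ∀ i, i < d → ext0 u i = 0 by
    ext i
    have := H i i.2
    simpa [ext0] using this
  have z : ∀ i, d ≤ i → ext0 u i = 0 := by
    intro i hi; simp [ext0]; intro; omega
  have Q2 : ∀ l, l + 2 ≤ d → w 0 * ext0 u (l + 3) + w 1 * (2 * ((l + 2 : ℕ) : ℂ) - 1) * ext0 u (l + 2) + w 2 * ext0 u (l + 1) = 0 := by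
    intro l hl
    have := Q (l + 2) hl
    simpa using this
  have Q0 := Q 0 (by omega)
  have Q1 := Q 1 (by omega)
  simp at Q0 Q1
  by_cases h2 : w 2 = 0
  · by_cases h0 : w 0 = 0
    · have h1 : w 1 ≠ 0 := by
        intro h1; apply hw; ext i; fin_cases i <;> simp [h0, h1, h2]
      have hX : ∀ c, c + 1 < d → X (c + 1) = 0 := by
        intro c hc
        have := E c hc
        simpa [h0, h2, h1, -Nat.cast_add, -Nat.cast_succ, odd_ne] using this
      have hU1 : ∀ l, 1 ≤ l → ext0 u l = 0 := by
        intro l hl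
        rcases lt_or_ge l d with hld | hld
        · rcases l with _ | _ | l
          · omega
          · simp [h0, h2] at Q1
            have : (2 - 1 : ℂ) ≠ 0 := by norm_num
            tauto
          · have := Q2 l hld.le
            simpa [h0, h2, h1, -Nat.cast_add, -Nat.cast_succ, odd_ne] using this
        · exact z l hld
      have hX0 : X 0 ≠ 0 := by
        intro hX0
        apply hline
        intro i hi
        rcases i with _ | i
        · exact hX0
        · exact hX i (by omega)
      have hA := congrFun hu 0
      simp only [Matrix.mulVec, dotProduct, AM, Matrix.of_apply, Pi.zero_apply] at hA
      rw [Finset.sum_eq_single ⟨0, by omega⟩] at hA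
      · simp [A, hX0] at hA
        intro i hi
        rcases i with _ | i
        · simpa [ext0, hi] using hA
        · exact hU1 _ (by omega)
      · intro b _ hb
        have hb' : 1 ≤ (b : ℕ) := by
          by_contra hc
          apply hb; apply Fin.ext; simp; omega
        have := hU1 b hb'
        simp [ext0] at this
        simp [this]
      · simp
    · exfalso
      have hX0 : X 0 = 0 := by
        simpa [h2, h0] using E0
      by_cases h1 : w 1 = 0
      · apply hline
        intro i hi
        have := E i (by omega)
        simpa [h2, h1, h0] using this
      · apply hline
        intro i hi
        induction i with
        | zero => exact hX0
        | succ i ih =>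
          have := E i (by omega)
          simpa [h2, h1, ih (by omega), -Nat.cast_add, -Nat.cast_succ, odd_ne] using this
  · have hdown : ∀ k i, 1 ≤ i → d ≤ i + k → ext0 u i = 0 ∧ ext0 u (i + 1) = 0 := by
      intro k
      induction k with
      | zero => intro i _ hi; exact ⟨z _ (by omega), z _ (by omega)⟩
      | succ k ih =>
        intro i hi hik
        have g := ih (i + 1) (by omega) (by omega)
        refine ⟨?_, g.1⟩
        rcases lt_or_ge i d with hid | hid
        · obtain ⟨l, rfl⟩ : ∃ l, i = l + 1 := ⟨i - 1, by omega⟩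
          have := Q2 l (by omega)
          have g1 : ext0 u (l + 2) = 0 := g.1
          have g2 : ext0 u (l + 3) = 0 := g.2
          simpa [g1, g2, h2] using this
        · exact z _ hid
    have hU : ∀ i, 1 ≤ i → ext0 u i = 0 := fun i hi => (hdown d i hi (by omega)).1
    simp [hU 1, hU 2, h2] at Q0 Q1
    suffices ext0 u 0 = 0 by
      intro i _
      rcases i with _ | i
      · exact this
      · exact hU _ (by omega)
    by_contra hne
    apply hpt
    have hX1 : X 1 = 0 := by tauto
    have h00 : w 0 * X 0 = 0 := by
      rcases Q0 with (h | h) | h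
      · simp [h]
      · simp [h]
      · exact absurd h hne
    have hup : ∀ i, i + 1 < d → X (i + 1) = 0 ∧ X (i + 2) = 0 := by
      intro i
      induction i with
      | zero =>
        intro hi
        have := E 0 hi
        simp [hX1, h00, h2] at this
        exact ⟨hX1, this⟩
      | succ i ih =>
        intro hi
        have g := ih (by omega)
        have := E (i + 1) hi
        have g2 : X (i + 1 + 1) = 0 := g.2
        simp only [g.1, g2, mul_zero, zero_add, mul_eq_zero, h2, false_or] at this
        exact ⟨g.2, this⟩
    intro i h1 hi
    obtain ⟨l, rfl⟩ : ∃ l, i = l + 1 := ⟨i - 1, by omega⟩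
    rcases l with _ | l
    · exact hX1
    · exact (hup l (by omega)).2

lemma exists_W {d : ℕ} (hd : 3 ≤ d) (X : ℕ → ℂ)
    (hline : ¬ ∀ i ≤ d - 2, X i = 0) (hpt : ¬ ∀ i, 1 ≤ i → i ≤ d → X i = 0) :
    ∃ p q : Fin d, p < q ∧ W X p q ≠ 0 := by
  by_contra! hcon
  have hc : ∀ p q : ℕ, p < q → q < d → W X p q = 0 := fun p q hpq hq =>
    hcon ⟨p, by omega⟩ ⟨q, hq⟩ hpq
  by_cases hX0 : X 0 = 0
  · classical
    push Not at hline
    have hj := Nat.find_spec hline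
    have hmin := fun m hm => Nat.find_min hline (m := m) hm
    set j := Nat.find hline
    have hj0 : j ≠ 0 := by
      intro h; rw [h] at hj; exact hj.2 hX0
    have hprev : X (j - 1) = 0 := by
      have := hmin (j - 1) (by omega)
      by_contra hne
      exact this ⟨by omega, hne⟩
    have h1 := congrFun (hc j (j + 1) (by omega) (by omega)) 2
    simp only [W, A, Matrix.cons_val, hj0, if_false, Nat.add_eq_zero_iff, one_ne_zero, and_false, Matrix.cons_val_zero, Matrix.cons_val_one, hprev, Pi.zero_apply, Nat.add_sub_cancel, zero_mul, zero_sub, neg_eq_zero, mul_eq_zero, odd_ne, hj.2, or_self] at h1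
  · apply hpt
    have hX1 : X 1 = 0 := by
      have h1 := congrFun (hc 0 1 (by omega) (by omega)) 2
      have : (2 - 1 : ℂ) ≠ 0 := by norm_num
      simp [W, A, hX0] at h1
      tauto
    intro i h1 hi
    rcases i with _ | _ | i
    · omega
    · exact hX1
    · have h1 := congrFun (hc 0 (i + 1) (by omega) (by omega)) 1
      simpa [W, A, hX0, hX1] using h1

lemma rank_point {d : ℕ} (hd : 3 ≤ d) (X : ℕ → ℂ) (hpt : ∀ i, 1 ≤ i → X i = 0) :
    (J d X).rank < d - 2 := by
  have h1 : ∀ c, A X 1 c = 0 := by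
    intro c; rcases c with _ | c
    · simp [A]
    · simp [A, hpt]
  have h2 : ∀ c, A X 2 c = 0 := by
    intro c; rcases c with _ | c <;> simp [A, hpt]
  have : J d X = 0 := by
    ext s l; simp [J, T, det3, h1, h2]
  rw [this, Matrix.rank_zero]
  omega

lemma rank_line {d : ℕ} (hd : 3 ≤ d) (X : ℕ → ℂ) (hl : ∀ i, i ≤ d - 2 → X i = 0) :
    (J d X).rank < d - 2 := by
  have h0 : ∀ c < d, A X 0 c = 0 := by
    intro c hc; rcases c with _ | c
    · simp [A, hl]
    · simp [A, hl c (by omega)]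
  have h1 : ∀ c < d - 2, A X 1 c = 0 := by
    intro c hc; rcases c with _ | c
    · simp [A]
    · simp [A, hl (c + 1) (by omega)]
  have h2 : ∀ c < d - 2, A X 2 c = 0 := by
    intro c hc; rcases c with _ | c
    · simp [A, hl 1 (by omega)]
    · simp [A, hl (c + 2) (by omega)]
  have hD : ∀ l c, d - 3 ≤ l → c < d - 2 → D X l 0 c = 0 := by
    intro l c hlt hc
    rcases c with _ | c
    · simp [D, hl 0 (by omega)]
    · have : ¬ (l = c) := by omega
      simp [D, this]
  have hz : ∀ s (l : Fin (d + 1)), d - 3 ≤ (l : ℕ) → J d X s l = 0 := by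
    rintro ⟨s, hs⟩ l hlt
    have a : (s 0 : ℕ) < s 1 := hs (by decide)
    have b : (s 1 : ℕ) < s 2 := hs (by decide)
    have c := (s 2).isLt
    simp [J, T, det3, h0 (s 0) (by omega), h0 (s 1) (by omega), h0 (s 2) (by omega),
      h1 (s 0) (by omega), h2 (s 0) (by omega), hD l (s 0) hlt (by omega)]
  let v : Fin (d + 1) → ℂ := fun l => if (l : ℕ) < d - 3 then 1 else 0
  have hJ : J d X = J d X * Matrix.diagonal v := by
    ext s l
    rw [Matrix.mul_diagonal]
    by_cases h : (l : ℕ) < d - 3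
    · simp [v, h]
    · simp [v, h, hz s l (by omega)]
  rw [hJ]
  refine lt_of_le_of_lt (Matrix.rank_mul_le_right _ _) ?_
  rw [Matrix.rank_diagonal]
  let g : {i // v i ≠ 0} → Fin (d - 3) := fun i => ⟨i.1, by
    by_contra h
    exact i.2 (by simp [v, h])⟩
  have hg : Function.Injective g := by
    intro i j hij
    have := congrArg Fin.val hij
    exact Subtype.ext (Fin.ext this)
  have := Fintype.card_le_of_injective g hg
  simp only [Fintype.card_fin] at this
  have h' : Fintype.card {i // v i ≠ 0} < d - 2 := by omega
  convert h'

end IGAux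

open IGAux in
/-- Singular locus of the inverse Gaussian moment variety via the Jacobian criterion:
for a nonzero point `x` of the affine cone, the Jacobian matrix of the `3 × 3` minors of
`H` has rank `< d - 2` at `x` if and only if `x₀ = ⋯ = x_{d-2} = 0` (the line) or
`x₁ = ⋯ = x_d = 0` (the point). -/
theorem invGauss_singularLocus (d : ℕ) (hd : 3 ≤ d) (x : Fin (d + 1) → ℂ) (hx : x ≠ 0)
    (hvan : ∀ s : Fin 3 → Fin d, StrictMono s →
      eval x (((invGaussMatrix d).submatrix id s).det) = 0) :
    (Matrix.of fun (s : {s : Fin 3 → Fin d // StrictMono s}) (l : Fin (d + 1)) =>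
        eval x (pderiv l (((invGaussMatrix d).submatrix id s.val).det))).rank < d - 2 ↔
      ((∀ i : Fin (d + 1), i.val ≤ d - 2 → x i = 0) ∨
        (∀ i : Fin (d + 1), 1 ≤ i.val → x i = 0)) := by
  have hJ : (Matrix.of fun (s : {s : Fin 3 → Fin d // StrictMono s}) (l : Fin (d + 1)) =>
        eval x (pderiv l (((invGaussMatrix d).submatrix id s.val).det))) = J d (ext0 x) := by
    ext s l
    simp only [Matrix.of_apply, J, eval_ddet]
  rw [hJ]
  have hz : ∀ i, d + 1 ≤ i → ext0 x i = 0 := by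
    intro i hi; simp [ext0]; intro; omega
  constructor
  · intro hr
    by_contra! hcon
    have hline : ¬ ∀ i ≤ d - 2, ext0 x i = 0 := by
      intro h
      obtain ⟨i, hi, hne⟩ := hcon.1
      apply hne
      simpa [ext0, i.isLt, -Order.lt_add_one_iff] using h i hi
    have hpt : ¬ ∀ i, 1 ≤ i → i ≤ d → ext0 x i = 0 := by
      intro h
      obtain ⟨i, hi, hne⟩ := hcon.2
      apply hne
      simpa [ext0, i.isLt, -Order.lt_add_one_iff] using h i hi (by omega)
    obtain ⟨p, q, hpq, hw⟩ := exists_W hd (ext0 x) hline hpt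
    have hdet : ∀ i j k : Fin d, i < j → j < k →
        det3 (A (ext0 x) · i) (A (ext0 x) · j) (A (ext0 x) · k) = 0 := by
      intro i j k h h'
      have := hvan _ (sm h h')
      rw [IGAux.eval_det] at this
      simpa using this
    have hk : ∀ c : Fin d, W (ext0 x) p q 0 * A (ext0 x) 0 c + W (ext0 x) p q 1 * A (ext0 x) 1 c
        + W (ext0 x) p q 2 * A (ext0 x) 2 c = 0 := by
      intro k
      have e : W (ext0 x) p q 0 * A (ext0 x) 0 k + W (ext0 x) p q 1 * A (ext0 x) 1 k
        + W (ext0 x) p q 2 * A (ext0 x) 2 k =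
          det3 (A (ext0 x) · k) (A (ext0 x) · p) (A (ext0 x) · q) := by
        simp [W, det3]; ring
      rw [e]
      rcases lt_trichotomy k p with h | h | h
      · exact hdet _ _ _ h hpq
      · subst h; simp only [det3]; ring
      · rcases lt_trichotomy k q with h' | h' | h'
        · have := hdet _ _ _ h h'
          simp only [det3] at this ⊢
          linear_combination -this
        · subst h'; simp only [det3]; ring
        · have := hdet _ _ _ hpq h'
          simp only [det3] at this ⊢
          linear_combination this
    have := rank_ge (ext0 x) p q hpq hw hk (fun u hu hL =>
      inj hd (ext0 x) _ hw (fun c hc => hk ⟨c, hc⟩) hline hpt u hu hL)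
    omega
  · rintro (h | h)
    · apply rank_line hd
      intro i hi
      have hi' : i < d + 1 := by omega
      simp [ext0, hi', h ⟨i, hi'⟩ hi]
    · apply rank_point hd
      intro i hi
      by_cases hi' : i < d + 1
      · simp [ext0, hi', h ⟨i, hi'⟩ hi]
      · exact hz i (by omega)
end

section
/- For every integer d ≥ 3, the vanishing ideal of the affine cone C_Γ ⊆ ℂ^{d+1} over the gamma moment parameterization equals the ideal I = I_3(G) generated by the 3×3 minors of G; that is, a polynomial f ∈ ℂ[m_0,…,m_d] vanishes at every point of C_Γ if and only if f ∈ I. -/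
open MvPolynomial

/-- The `3 × d` matrix `G` of the gamma moment variety: its `c`-th column, for `1 ≤ c ≤ d`,
is `((c-1)·m_{c-1}, m_{c-1}, m_c)ᵀ`.  Columns are indexed by `Fin d`, with `c : Fin d`
corresponding to the paper's column `c + 1`. -/
noncomputable def gammaMatrix (d : ℕ) :
    Matrix (Fin 3) (Fin d) (MvPolynomial (Fin (d + 1)) ℂ) :=
  Matrix.of fun r c =>
    ![C (c.val : ℂ) * X ⟨c.val, by have := c.isLt; omega⟩,
      X ⟨c.val, by have := c.isLt; omega⟩,
      X ⟨c.val + 1, by have := c.isLt; omega⟩] r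

/-- The ideal `I₃(G)` generated by all `3 × 3` minors of `G`, i.e. determinants of
submatrices obtained by choosing `3` of the `d` columns. -/
noncomputable def gammaIdeal (d : ℕ) : Ideal (MvPolynomial (Fin (d + 1)) ℂ) :=
  Ideal.span
    { p | ∃ s : Fin 3 → Fin d, StrictMono s ∧ p = ((gammaMatrix d).submatrix id s).det }

/-- The gamma moment sequence: `m₀ = 1` and `mᵢ = θ·(k + i - 1)·m_{i-1}` for `i ≥ 1`,
i.e. `mᵢ = θⁱ·k(k+1)⋯(k+i-1)`. -/
noncomputable def gammaMoment (k θ : ℂ) : ℕ → ℂ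
  | 0 => 1
  | n + 1 => θ * (k + (n : ℂ)) * gammaMoment k θ n

namespace GammaAux

/-- Total degree of an exponent vector. -/
def deg {d : ℕ} (μ : Fin (d + 1) →₀ ℕ) : ℕ := ∑ i, μ i

/-- Weight of an exponent vector. -/
def wt {d : ℕ} (μ : Fin (d + 1) →₀ ℕ) : ℕ := ∑ i : Fin (d + 1), i.val * μ i

/-- Sum of squares of indices: decreases along rewriting. -/
def sq {d : ℕ} (μ : Fin (d + 1) →₀ ℕ) : ℕ := ∑ i : Fin (d + 1), i.val ^ 2 * μ i

/-- Standard monomials. -/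
def Std {d : ℕ} (μ : Fin (d + 1) →₀ ℕ) : Prop :=
  ∀ a b c : Fin (d + 1), a < b → b.val + 2 ≤ c.val → μ a = 0 ∨ μ b = 0 ∨ μ c = 0

/-- The polynomial in the shape parameter attached to a monomial. -/
noncomputable def P {d : ℕ} (μ : Fin (d + 1) →₀ ℕ) : Polynomial ℂ :=
  ∏ i : Fin (d + 1), (ascPochhammer ℂ i.val) ^ μ i

lemma sq_add {d : ℕ} (μ ν : Fin (d + 1) →₀ ℕ) : sq (μ + ν) = sq μ + sq ν := by
  simp [sq, mul_add, Finset.sum_add_distrib]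

lemma sq_single {d : ℕ} (a : Fin (d + 1)) : sq (Finsupp.single a 1) = a.val ^ 2 := by
  simp only [sq]
  rw [Finset.sum_eq_single a]
  · simp
  · intro b _ hb
    simp [hb.symm]
  · simp

lemma moment_eq (k θ : ℂ) (n : ℕ) :
    gammaMoment k θ n = θ ^ n * (ascPochhammer ℂ n).eval k := by
  induction n with
  | zero => simp [gammaMoment]
  | succ n ih =>
    rw [gammaMoment, ih, ascPochhammer_succ_right]
    simp only [Polynomial.eval_mul, Polynomial.eval_add, Polynomial.eval_X,
      Polynomial.eval_natCast]
    ring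

lemma eval_formula {d : ℕ} (f : MvPolynomial (Fin (d + 1)) ℂ) (t k θ : ℂ) :
    eval (fun i : Fin (d + 1) => t * gammaMoment k θ i.val) f =
      ∑ μ ∈ f.support, coeff μ f * (P μ).eval k * θ ^ wt μ * t ^ deg μ := by
  rw [eval_eq']
  refine Finset.sum_congr rfl fun μ _ => ?_
  have : ∏ i : Fin (d + 1), (t * gammaMoment k θ i.val) ^ μ i =
      (P μ).eval k * θ ^ wt μ * t ^ deg μ := by
    simp only [moment_eq, P, wt, deg, Polynomial.eval_prod, Polynomial.eval_pow,
      ← Finset.prod_pow_eq_pow_sum, ← Finset.prod_mul_distrib]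
    refine Finset.prod_congr rfl fun i _ => ?_
    rw [mul_pow, mul_pow, ← pow_mul]
    ring
  rw [this]
  ring

lemma separate {ι : Type*} (s : Finset ι) (c : ι → ℂ) (e : ι → ℕ)
    (h : ∀ t : ℂ, ∑ i ∈ s, c i * t ^ e i = 0) (n : ℕ) :
    ∑ i ∈ s with e i = n, c i = 0 := by
  have h0 : (∑ i ∈ s, Polynomial.C (c i) * Polynomial.X ^ e i : Polynomial ℂ) = 0 := by
    apply Polynomial.funext
    intro t
    simpa [Polynomial.eval_finsetSum] using h t
  have h1 := congrArg (fun p => Polynomial.coeff p n) h0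
  simp only [Polynomial.finsetSum_coeff, Polynomial.coeff_C_mul, Polynomial.coeff_X_pow,
    Polynomial.coeff_zero] at h1
  rw [Finset.sum_filter]
  refine Eq.trans ?_ h1
  refine Finset.sum_congr rfl fun i _ => ?_
  by_cases hh : e i = n
  · rw [if_pos hh, if_pos hh.symm, mul_one]
  · rw [if_neg hh, if_neg (Ne.symm hh), mul_zero]

lemma class_sum {d : ℕ} (f : MvPolynomial (Fin (d + 1)) ℂ)
    (h : ∀ t k θ : ℂ, eval (fun i : Fin (d + 1) => t * gammaMoment k θ i.val) f = 0)
    (n w : ℕ) :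
    ∑ μ ∈ (f.support.filter (fun μ => deg μ = n)).filter (fun μ => wt μ = w),
      Polynomial.C (coeff μ f) * P μ = 0 := by
  apply Polynomial.funext
  intro k
  have h1 : ∀ θ : ℂ, ∑ μ ∈ f.support.filter (fun μ => deg μ = n),
      (coeff μ f * (P μ).eval k) * θ ^ wt μ = 0 := by
    intro θ
    apply separate
    intro t
    rw [← eval_formula]
    exact h t k θ
  have h2 := separate _ _ _ h1 w
  simpa [Polynomial.eval_finsetSum] using h2

lemma asc_ne (a i : ℕ) (h : i ≤ a) : (ascPochhammer ℂ i).eval (-(a : ℂ)) ≠ 0 := by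
  induction i with
  | zero => simp
  | succ i ih =>
    rw [ascPochhammer_succ_right]
    simp only [Polynomial.eval_mul, Polynomial.eval_add, Polynomial.eval_X,
      Polynomial.eval_natCast]
    refine mul_ne_zero (ih (by omega)) ?_
    intro h0
    have : (i : ℂ) = a := by linear_combination h0
    have := Nat.cast_injective this
    omega

lemma asc_factor (a i : ℕ) (h : a < i) : ∃ Q : Polynomial ℂ,
    ascPochhammer ℂ i = (Polynomial.X + Polynomial.C (a : ℂ)) * Q ∧ Q.eval (-(a : ℂ)) ≠ 0 := by
  induction i with
  | zero => omega
  | succ i ih =>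
    rcases Nat.lt_succ_iff_lt_or_eq.mp h with h' | h'
    · obtain ⟨Q, hQ, hQ0⟩ := ih h'
      refine ⟨Q * (Polynomial.X + (i : Polynomial ℂ)), ?_, ?_⟩
      · rw [ascPochhammer_succ_right, hQ]; ring
      · simp only [Polynomial.eval_mul, Polynomial.eval_add, Polynomial.eval_X,
          Polynomial.eval_natCast]
        refine mul_ne_zero hQ0 ?_
        intro h0
        have : (i : ℂ) = a := by linear_combination h0
        have := Nat.cast_injective this
        omega
    · subst h'
      refine ⟨ascPochhammer ℂ a, ?_, asc_ne a a le_rfl⟩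
      rw [ascPochhammer_succ_right]
      simp [mul_comm]

lemma P_factor {d : ℕ} (μ : Fin (d + 1) →₀ ℕ) (a : Fin (d + 1)) (h : ∀ i < a, μ i = 0) :
    ∃ Q : Polynomial ℂ, P μ = (Polynomial.X + Polynomial.C (a.val : ℂ)) ^ (deg μ - μ a) * Q ∧
      Q.eval (-(a.val : ℂ)) ≠ 0 := by
  have key : ∀ i : Fin (d + 1), ∃ Q : Polynomial ℂ, (ascPochhammer ℂ i.val) ^ μ i =
      (Polynomial.X + Polynomial.C (a.val : ℂ)) ^ (if i = a then 0 else μ i) * Q ∧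
      Q.eval (-(a.val : ℂ)) ≠ 0 := by
    intro i
    rcases lt_trichotomy i a with hi | hi | hi
    · refine ⟨1, ?_, by simp⟩
      simp [h i hi]
    · subst hi
      refine ⟨(ascPochhammer ℂ i.val) ^ μ i, by simp, ?_⟩
      rw [Polynomial.eval_pow]
      exact pow_ne_zero _ (asc_ne _ _ le_rfl)
    · obtain ⟨Q, hQ, hQ0⟩ := asc_factor a.val i.val hi
      refine ⟨Q ^ μ i, ?_, ?_⟩
      · rw [if_neg hi.ne', hQ, mul_pow]
      · rw [Polynomial.eval_pow]
        exact pow_ne_zero _ hQ0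
  choose Q hQ hQ0 using key
  refine ⟨∏ i, Q i, ?_, ?_⟩
  · have hs : deg μ - μ a = ∑ i, (if i = a then 0 else μ i) := by
      have : deg μ = μ a + ∑ i, (if i = a then 0 else μ i) := by
        have h1 : μ a = ∑ i, (if i = a then μ i else 0) := by simp
        rw [h1, ← Finset.sum_add_distrib]
        refine Finset.sum_congr rfl fun i _ => ?_
        split_ifs <;> simp
      omega
    rw [hs, ← Finset.prod_pow_eq_pow_sum, ← Finset.prod_mul_distrib]
    exact Finset.prod_congr rfl fun i _ => hQ i
  · rw [Polynomial.eval_prod]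
    exact Finset.prod_ne_zero_iff.mpr fun i _ => hQ0 i

lemma uniq_aux {d : ℕ} (μ ν : Fin (d + 1) →₀ ℕ) (hμ : Std μ) (hν : Std ν) (a b : Fin (d + 1))
    (h0 : ∀ i < a, μ i = 0) (h0' : ∀ i < a, ν i = 0) (ha : μ a = ν a) (ha0 : μ a ≠ 0)
    (hd : deg μ = deg ν) (hw : wt μ = wt ν) (hab : a < b)
    (hb : μ b ≠ 0) (hbm : ∀ i, a < i → i < b → μ i = 0)
    (hbn : ∀ i, a < i → i < b → ν i = 0) : μ = ν := by
  have hd' : ∑ i, ((μ i : ℤ) - ν i) = 0 := by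
    have : ((deg μ : ℕ) : ℤ) = deg ν := by rw [hd]
    simp only [deg] at this
    push_cast at this
    rw [Finset.sum_sub_distrib]
    linarith
  have hw' : ∑ i : Fin (d + 1), (i.val : ℤ) * ((μ i : ℤ) - ν i) = 0 := by
    have : ((wt μ : ℕ) : ℤ) = wt ν := by rw [hw]
    simp only [wt] at this
    push_cast at this
    simp only [mul_sub]
    rw [Finset.sum_sub_distrib]
    linarith
  have hc : ∀ z : ℤ, ∑ i : Fin (d + 1), (z - (i.val : ℤ)) * ((μ i : ℤ) - ν i) = 0 := by
    intro z
    simp only [sub_mul z]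
    rw [Finset.sum_sub_distrib, ← Finset.mul_sum, hd', hw']
    simp
  have hμs : ∀ i, b.val + 2 ≤ i.val → μ i = 0 := by
    intro i hi
    rcases hμ a b i hab hi with h | h | h
    · exact absurd h ha0
    · exact absurd h hb
    · exact h
  have hle : ∀ i, i ≤ a → μ i = ν i := by
    intro i hi
    rcases hi.lt_or_eq with h | h
    · rw [h0 i h, h0' i h]
    · rw [h, ha]
  have hlow : ∀ i, i < b → μ i = ν i := by
    intro i hi
    rcases le_or_gt i a with h | h
    · exact hle i h
    · rw [hbm i h hi, hbn i h hi]
  have hνb : ν b ≠ 0 := by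
    intro hνb
    have hz := (Finset.sum_eq_zero_iff_of_nonneg (s := Finset.univ)
      (f := fun i : Fin (d + 1) => (((b.val : ℤ) + 1) - (i.val : ℤ)) * ((μ i : ℤ) - ν i)) ?_).mp
      (hc _) b (Finset.mem_univ _)
    · simp [hνb] at hz
      exact hb hz
    · intro i _
      rcases lt_trichotomy i b with h | h | h
      · rw [hlow i h]; simp
      · subst h; simp [hνb]
      · have h' : b.val < i.val := h
        rcases Nat.lt_or_ge i.val (b.val + 2) with h2 | h2
        · have : (i.val : ℤ) = b.val + 1 := by omega
          rw [this]; simp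
        · rw [hμs i h2]
          apply mul_nonneg_of_nonpos_of_nonpos <;> [skip; simp]
          omega
  have hνs : ∀ i, b.val + 2 ≤ i.val → ν i = 0 := by
    intro i hi
    rcases hν a b i hab hi with h | h | h
    · exact absurd h (ha ▸ ha0)
    · exact absurd h hνb
    · exact h
  have hbb : μ b = ν b := by
    have := hc ((b.val : ℤ) + 1)
    rw [Finset.sum_eq_single b] at this
    · have h3 : (μ b : ℤ) - ν b = 0 := by linarith
      omega
    · intro i _ hi
      rcases lt_trichotomy i b with h | h | h
      · rw [hlow i h]; simp
      · exact absurd h hi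
      · have h' : b.val < i.val := h
        rcases Nat.lt_or_ge i.val (b.val + 2) with h2 | h2
        · have : (i.val : ℤ) = b.val + 1 := by omega
          rw [this]; simp
        · rw [hμs i h2, hνs i h2]; simp
    · simp
  ext i
  rcases lt_trichotomy i b with h | h | h
  · exact hlow i h
  · rw [h, hbb]
  · have h' : b.val < i.val := h
    rcases Nat.lt_or_ge i.val (b.val + 2) with h2 | h2
    · have hi1 : i.val = b.val + 1 := by omega
      have := hd'
      rw [Finset.sum_eq_single i] at this
      · omega
      · intro j _ hj
        rcases lt_trichotomy j b with h | h | h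
        · rw [hlow j h]; simp
        · rw [h, hbb]; simp
        · have h'' : b.val < j.val := h
          have : j.val ≠ i.val := fun h => hj (Fin.ext h)
          rw [hμs j (by omega), hνs j (by omega)]; simp
      · simp
    · rw [hμs i h2, hνs i h2]

lemma uniq {d : ℕ} (μ ν : Fin (d + 1) →₀ ℕ) (hμ : Std μ) (hν : Std ν) (a : Fin (d + 1))
    (h0 : ∀ i < a, μ i = 0) (h0' : ∀ i < a, ν i = 0) (ha : μ a = ν a) (ha0 : μ a ≠ 0)
    (hd : deg μ = deg ν) (hw : wt μ = wt ν) : μ = ν := by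
  classical
  by_cases hex : ∃ b, a < b ∧ (μ b ≠ 0 ∨ ν b ≠ 0)
  · obtain ⟨b, hb, hmin⟩ := Finset.exists_min_image
      (Finset.univ.filter fun b : Fin (d + 1) => a < b ∧ (μ b ≠ 0 ∨ ν b ≠ 0)) id
      (by obtain ⟨b, hb⟩ := hex; exact ⟨b, by simpa using hb⟩)
    simp only [Finset.mem_filter, Finset.mem_univ, true_and, id] at hb hmin
    have hbm : ∀ i, a < i → i < b → μ i = 0 := by
      intro i h1 h2
      by_contra h3
      exact absurd (hmin i ⟨h1, Or.inl h3⟩) (not_le.mpr h2)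
    have hbn : ∀ i, a < i → i < b → ν i = 0 := by
      intro i h1 h2
      by_contra h3
      exact absurd (hmin i ⟨h1, Or.inr h3⟩) (not_le.mpr h2)
    rcases hb.2 with h | h
    · exact uniq_aux μ ν hμ hν a b h0 h0' ha ha0 hd hw hb.1 h hbm hbn
    · exact (uniq_aux ν μ hν hμ a b h0' h0 ha.symm (ha ▸ ha0) hd.symm hw.symm hb.1 h hbn hbm).symm
  · push Not at hex
    ext i
    rcases lt_trichotomy i a with h | h | h
    · rw [h0 i h, h0' i h]
    · rw [h, ha]
    · rw [(hex i h).1, (hex i h).2]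

lemma indep {d : ℕ} (g : MvPolynomial (Fin (d + 1)) ℂ) (hs : ∀ μ ∈ g.support, Std μ)
    (h : ∀ t k θ : ℂ, eval (fun i : Fin (d + 1) => t * gammaMoment k θ i.val) g = 0) :
    g = 0 := by
  classical
  by_contra hg
  obtain ⟨μ₀, hμ₀⟩ := MvPolynomial.support_nonempty.mpr hg
  have hsum := class_sum g h (deg μ₀) (wt μ₀)
  set T := (g.support.filter (fun μ => deg μ = deg μ₀)).filter (fun μ => wt μ = wt μ₀) with hT
  have hmem : ∀ μ, μ ∈ T ↔ (μ ∈ g.support ∧ deg μ = deg μ₀) ∧ wt μ = wt μ₀ := by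
    intro μ; simp [hT]
  have hμ₀T : μ₀ ∈ T := (hmem _).mpr ⟨⟨hμ₀, rfl⟩, rfl⟩
  by_cases hex : ∃ a, ∃ ν ∈ T, ν a ≠ 0
  · obtain ⟨a, ha, hmin⟩ := Finset.exists_min_image
      (Finset.univ.filter fun a : Fin (d + 1) => ∃ ν ∈ T, ν a ≠ 0) id
      (by obtain ⟨b, hb⟩ := hex; exact ⟨b, by simpa using hb⟩)
    simp only [Finset.mem_filter, Finset.mem_univ, true_and, id] at ha hmin
    have hlow : ∀ ν ∈ T, ∀ i < a, ν i = 0 := by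
      intro ν hν i hi
      by_contra h3
      exact absurd (hmin i ⟨ν, hν, h3⟩) (not_le.mpr hi)
    obtain ⟨μ, hμ, hmax⟩ := Finset.exists_max_image T (fun ν => ν a) ⟨μ₀, hμ₀T⟩
    have hμa : μ a ≠ 0 := by
      obtain ⟨ν, hν, hνa⟩ := ha
      have := hmax ν hν
      omega
    obtain ⟨Q, hQ, hQ0⟩ := P_factor μ a (hlow μ hμ)
    have hμ' := (hmem μ).mp hμ
    have hdvd : (Polynomial.X + Polynomial.C (a.val : ℂ)) ^ (deg μ - μ a + 1) ∣
        Polynomial.C (coeff μ g) * P μ := by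
      rw [← Finset.add_sum_erase T _ hμ] at hsum
      rw [eq_neg_of_add_eq_zero_left hsum]
      rw [dvd_neg]
      refine Finset.dvd_sum fun ν hν => ?_
      obtain ⟨hne, hν⟩ := Finset.mem_erase.mp hν
      have hν' := (hmem ν).mp hν
      obtain ⟨R, hR, -⟩ := P_factor ν a (hlow ν hν)
      have h1 : ν a ≠ μ a := by
        intro h1
        exact hne (uniq μ ν (hs _ hμ'.1.1) (hs _ hν'.1.1) a (hlow μ hμ) (hlow ν hν) h1.symm hμa
          (hμ'.1.2.trans hν'.1.2.symm) (hμ'.2.trans hν'.2.symm)).symm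
      have h2 := hmax ν hν
      have h3 : μ a ≤ deg μ := Finset.single_le_sum (f := fun i => μ i)
        (fun _ _ => Nat.zero_le _) (Finset.mem_univ a)
      rw [hR]
      refine Dvd.dvd.mul_left (Dvd.dvd.mul_right (pow_dvd_pow _ ?_) _) _
      rw [hν'.1.2, ← hμ'.1.2]
      omega
    rw [hQ, pow_succ, mul_left_comm] at hdvd
    have hne : (Polynomial.X + Polynomial.C (a.val : ℂ)) ^ (deg μ - μ a) ≠ 0 :=
      pow_ne_zero _ (Polynomial.X_add_C_ne_zero _)
    have hdvd2 := (mul_dvd_mul_iff_left hne).mp hdvd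
    obtain ⟨R, hR⟩ := hdvd2
    have := congrArg (Polynomial.eval (-(a.val : ℂ))) hR
    simp only [Polynomial.eval_mul, Polynomial.eval_C, Polynomial.eval_add, Polynomial.eval_X,
      neg_add_cancel, zero_mul] at this
    rcases mul_eq_zero.mp this with h4 | h4
    · exact (MvPolynomial.mem_support_iff.mp hμ'.1.1) h4
    · exact hQ0 h4
  · push Not at hex
    have hz : ∀ ν ∈ T, ν = 0 := fun ν hν => Finsupp.ext fun i => hex i ν hν
    have hT1 : T = {0} := by
      ext ν
      simp only [Finset.mem_singleton]
      exact ⟨hz ν, fun h => by rw [h, ← hz μ₀ hμ₀T]; exact hμ₀T⟩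
    rw [hT1] at hsum
    have h5 := hz μ₀ hμ₀T
    simp [P] at hsum
    rw [h5] at hμ₀
    exact (MvPolynomial.mem_support_iff.mp hμ₀) hsum

lemma minor_eq {d : ℕ} (s : Fin 3 → Fin d) :
    ((gammaMatrix d).submatrix id s).det =
      C (((s 0).val : ℂ) - (s 1).val) * (X (s 0).castSucc * X (s 1).castSucc * X (s 2).succ)
      - C (((s 0).val : ℂ) - (s 2).val) * (X (s 0).castSucc * X (s 2).castSucc * X (s 1).succ)
      + C (((s 1).val : ℂ) - (s 2).val) * (X (s 1).castSucc * X (s 2).castSucc * X (s 0).succ) := by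
  have e1 : ∀ (c : Fin d) h, (⟨c.val, h⟩ : Fin (d + 1)) = c.castSucc := fun _ _ => rfl
  have e2 : ∀ (c : Fin d) h, (⟨c.val + 1, h⟩ : Fin (d + 1)) = c.succ := fun _ _ => rfl
  rw [Matrix.det_fin_three]
  simp [gammaMatrix, e1, e2]
  ring

lemma ideal_vanish {d : ℕ} (f : MvPolynomial (Fin (d + 1)) ℂ) (hf : f ∈ gammaIdeal d)
    (t k θ : ℂ) : eval (fun i : Fin (d + 1) => t * gammaMoment k θ i.val) f = 0 := by
  have : gammaIdeal d ≤ RingHom.ker (eval (fun i : Fin (d + 1) => t * gammaMoment k θ i.val)) := by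
    rw [gammaIdeal, Ideal.span_le]
    rintro p ⟨s, -, rfl⟩
    rw [SetLike.mem_coe, RingHom.mem_ker, minor_eq]
    simp [gammaMoment]
    ring
  exact this hf

/-- Polynomials congruent to combinations of standard monomials modulo the ideal. -/
noncomputable def W (d : ℕ) : Submodule ℂ (MvPolynomial (Fin (d + 1)) ℂ) :=
  (gammaIdeal d).restrictScalars ℂ ⊔ restrictSupport ℂ {μ | Std μ}

lemma mono_mem {d : ℕ} : ∀ (N : ℕ) (μ : Fin (d + 1) →₀ ℕ), sq μ = N → monomial μ 1 ∈ W d := by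
  intro N
  induction N using Nat.strong_induction_on with
  | _ N ih =>
  intro μ hN
  by_cases hμ : Std μ
  · apply Submodule.mem_sup_right
    rw [mem_restrictSupport_iff]
    intro ν hν
    have := MvPolynomial.support_monomial_subset hν
    simp only [Finset.mem_singleton] at this
    rw [this]; exact hμ
  · simp only [Std] at hμ
    push Not at hμ
    obtain ⟨a, b, c, hab, hbc, ha, hb, hc⟩ := hμ
    have hac' : a.val < b.val := hab
    have hbd : b.val < d := by omega
    let a' : Fin d := ⟨a.val, by omega⟩
    let b' : Fin d := ⟨b.val, by omega⟩
    let c' : Fin d := ⟨c.val - 1, by omega⟩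
    have ea : a'.castSucc = a := rfl
    have eb : b'.castSucc = b := rfl
    have ec : c'.succ = c := by ext; simp [c']; omega
    let δ : Fin (d + 1) → Fin (d + 1) → Fin (d + 1) → (Fin (d + 1) →₀ ℕ) := fun x y z =>
      Finsupp.single x 1 + Finsupp.single y 1 + Finsupp.single z 1
    have hle : δ a b c ≤ μ := by
      intro i
      have h1 : a ≠ b := hab.ne
      have h2 : b ≠ c := by intro h; subst h; omega
      have h3 : a ≠ c := by intro h; subst h; omega
      simp only [δ, Finsupp.add_apply, Finsupp.single_apply]
      split_ifs <;> subst_vars <;> omega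
    obtain ⟨ν, hν⟩ : ∃ ν, μ = ν + δ a b c := ⟨μ - δ a b c, (tsub_add_cancel_of_le hle).symm⟩
    have hmonδ : ∀ x y z, monomial (ν + δ x y z) (1 : ℂ) = monomial ν 1 * (X x * X y * X z) := by
      intro x y z
      simp only [X, δ, monomial_mul, mul_one]
    have hsqδ : ∀ x y z, sq (ν + δ x y z) = sq ν + (x.val ^ 2 + y.val ^ 2 + z.val ^ 2) := by
      intro x y z
      simp only [δ, sq_add, sq_single]
    have m1 : monomial (ν + δ a c'.castSucc b'.succ) (1 : ℂ) ∈ W d := by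
      refine ih _ ?_ _ rfl
      rw [← hN, hν, hsqδ, hsqδ]
      obtain ⟨r, hr⟩ : ∃ r, c.val = b.val + 2 + r := ⟨c.val - (b.val + 2), by omega⟩
      have : c'.castSucc.val = b.val + 1 + r := by simp [c']; omega
      rw [this, hr]
      simp [b']
      nlinarith
    have m2 : monomial (ν + δ b c'.castSucc a'.succ) (1 : ℂ) ∈ W d := by
      refine ih _ ?_ _ rfl
      rw [← hN, hν, hsqδ, hsqδ]
      obtain ⟨r, hr⟩ : ∃ r, c.val = a.val + 2 + r := ⟨c.val - (a.val + 2), by omega⟩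
      have : c'.castSucc.val = a.val + 1 + r := by simp [c']; omega
      rw [this, hr]
      simp [a']
      nlinarith
    have hdet : ((gammaMatrix d).submatrix id ![a', b', c']).det ∈ gammaIdeal d := by
      refine Ideal.subset_span ⟨_, ?_, rfl⟩
      rw [Fin.strictMono_iff_lt_succ]
      intro i
      fin_cases i
      · exact hab
      · change b.val < c.val - 1
        omega
    have hdet2 : monomial ν 1 * ((gammaMatrix d).submatrix id ![a', b', c']).det ∈ W d :=
      Submodule.mem_sup_left (Ideal.mul_mem_left _ _ hdet)
    have hne : (a.val : ℂ) - b.val ≠ 0 := by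
      intro h
      have := Nat.cast_injective (sub_eq_zero.mp h)
      omega
    have hEq : ((a.val : ℂ) - b.val) • monomial μ (1 : ℂ) =
        monomial ν 1 * ((gammaMatrix d).submatrix id ![a', b', c']).det
        + ((a'.val : ℂ) - c'.val) • monomial (ν + δ a c'.castSucc b'.succ) (1 : ℂ)
        - ((b'.val : ℂ) - c'.val) • monomial (ν + δ b c'.castSucc a'.succ) (1 : ℂ) := by
      rw [hν, hmonδ, hmonδ, hmonδ, minor_eq]
      simp only [MvPolynomial.smul_eq_C_mul, Matrix.cons_val_zero, Matrix.cons_val_one,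
        Matrix.cons_val, ea, eb, ec]
      have e1 : a'.val = a.val := rfl
      have e2 : b'.val = b.val := rfl
      rw [e1, e2]
      ring
    have hfin : ((a.val : ℂ) - b.val) • monomial μ (1 : ℂ) ∈ W d := by
      rw [hEq]
      exact Submodule.sub_mem _ (Submodule.add_mem _ hdet2 (Submodule.smul_mem _ _ m1))
        (Submodule.smul_mem _ _ m2)
    exact (Submodule.smul_mem_iff _ hne).mp hfin

lemma all_mem {d : ℕ} (f : MvPolynomial (Fin (d + 1)) ℂ) : f ∈ W d := by
  rw [f.as_sum]
  refine Submodule.sum_mem _ fun μ _ => ?_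
  have : monomial μ (coeff μ f) = coeff μ f • monomial μ (1 : ℂ) := by
    simp [MvPolynomial.smul_monomial]
  rw [this]
  exact Submodule.smul_mem _ _ (mono_mem _ μ rfl)

end GammaAux

/-- For `d ≥ 3`, a polynomial vanishes on the affine cone over the gamma moment
parameterization iff it lies in the determinantal ideal `I₃(G)`. -/
theorem gamma_vanishingIdeal (d : ℕ) (hd : 3 ≤ d) (f : MvPolynomial (Fin (d + 1)) ℂ) :
    (∀ t k θ : ℂ, eval (fun i : Fin (d + 1) => t * gammaMoment k θ i.val) f = 0) ↔
      f ∈ gammaIdeal d := by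
  constructor
  · intro h
    obtain ⟨p, hp, g, hg, hpg⟩ := Submodule.mem_sup.mp (GammaAux.all_mem f)
    have hp' : p ∈ gammaIdeal d := hp
    have hg0 : g = 0 := by
      apply GammaAux.indep g
      · intro μ hμ
        rw [mem_restrictSupport_iff] at hg
        exact hg hμ
      · intro t k θ
        have h1 := h t k θ
        rw [← hpg, map_add, GammaAux.ideal_vanish p hp', zero_add] at h1
        exact h1
    rw [← hpg, hg0, add_zero]
    exact hp'
  · intro hf t k θ
    exact GammaAux.ideal_vanish f hf t k θ
end

section
/- For every integer d ≥ 3, the quotient ring ℂ[m_0,…,m_d]/I_3(G) has Krull dimension 3. -/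
open MvPolynomial

/-- If all maximal minors of a `3 × d` matrix over a field vanish, it has a left kernel vector. -/
theorem gamma_left_kernel {K : Type} [Field K] {d : ℕ} (M : Matrix (Fin 3) (Fin d) K)
    (h : ∀ s : Fin 3 → Fin d, StrictMono s → (M.submatrix id s).det = 0) :
    ∃ v : Fin 3 → K, v ≠ 0 ∧ ∀ c, ∑ r, v r * M r c = 0 := by
  set W := Submodule.span K (Set.range M.transpose) with hW
  by_cases htop : W = ⊤
  · exfalso
    obtain ⟨κ, a, hinj, hspan, hli⟩ := exists_linearIndependent' K (M.transpose)
    have : Finite κ := Finite.of_injective a hinj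
    have : Fintype κ := Fintype.ofFinite κ
    have hcard : Fintype.card κ = 3 := by
      have h1 := finrank_span_eq_card hli
      rw [hspan, ← hW, htop, finrank_top] at h1
      simpa using h1.symm
    classical
    have hc : (Finset.univ.image a).card = 3 := by
      rw [Finset.card_image_of_injective _ hinj, Finset.card_univ, hcard]
    let s := (Finset.univ.image a).orderEmbOfFin hc
    have hs : ∀ i, ∃ k, a k = s i := fun i => by
      have h0 := Finset.orderEmbOfFin_mem _ hc i
      obtain ⟨k, -, hk⟩ := Finset.mem_image.1 h0
      exact ⟨k, hk⟩
    choose b hb using hs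
    have hbinj : Function.Injective b := fun i j hij => by
      apply s.injective
      rw [← hb, ← hb, hij]
    have hli2 := hli.comp b hbinj
    have hdet := h s s.strictMono
    have heq : (M.transpose ∘ a) ∘ b = (M.submatrix id s).transpose := by
      funext i r
      change M r (a (b i)) = M r (s i)
      rw [hb]
    rw [heq] at hli2
    have h3 := (Matrix.linearIndependent_rows_iff_isUnit
      (A := (M.submatrix id s).transpose)).1 hli2
    rw [Matrix.isUnit_iff_isUnit_det, Matrix.det_transpose, hdet] at h3
    exact not_isUnit_zero h3
  · obtain ⟨f, hf, hle⟩ := Submodule.exists_le_ker_of_lt_top W (lt_top_iff_ne_top.2 htop)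
    have hfx : ∀ x : Fin 3 → K, f x = ∑ r, f (Pi.single r 1) * x r := by
      intro x
      conv_lhs => rw [LinearMap.pi_apply_eq_sum_univ f x]
      refine Finset.sum_congr rfl fun r _ => ?_
      rw [smul_eq_mul, mul_comm]
      congr 2
      funext j
      simp [Pi.single_apply, eq_comm]
    refine ⟨fun r => f (Pi.single r 1), ?_, ?_⟩
    · intro h0
      apply hf
      ext x
      rw [LinearMap.comp_apply]
      exact congrFun h0 x |>.trans (by simp)
    · intro c
      have : M.transpose c ∈ W := Submodule.subset_span ⟨c, rfl⟩
      have := hle this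
      rw [LinearMap.mem_ker, hfx] at this
      exact this

theorem gamma_three_gens {K : Type} [Field K] [Algebra ℂ K] (d : ℕ) (m : ℕ → K)
    (v : Fin 3 → K) (hv : v ≠ 0)
    (h : ∀ c < d, (v 0 * c + v 1) * m c + v 2 * m (c + 1) = 0) :
    ∃ x : Fin 3 → K, ∀ k ≤ d, m k ∈ IntermediateField.adjoin ℂ (Set.range x) := by
  have : CharZero K := charZero_of_injective_algebraMap (algebraMap ℂ K).injective
  by_cases h2 : v 2 = 0
  · by_cases hex : ∃ k0 < d, m k0 ≠ 0
    · obtain ⟨k0, hk0, hm0⟩ := hex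
      have e0 : v 0 * k0 + v 1 = 0 := by
        have := h k0 hk0
        rw [h2, zero_mul, add_zero] at this
        exact (mul_eq_zero.1 this).resolve_right hm0
      refine ⟨![m k0, m d, 0], fun k hk => ?_⟩
      have a0 : m k0 ∈ IntermediateField.adjoin ℂ (Set.range ![m k0, m d, 0]) :=
        IntermediateField.subset_adjoin _ _ ⟨0, rfl⟩
      have a1 : m d ∈ IntermediateField.adjoin ℂ (Set.range ![m k0, m d, 0]) :=
        IntermediateField.subset_adjoin _ _ ⟨1, rfl⟩
      rcases hk.eq_or_lt with rfl | hk
      · exact a1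
      by_cases hkk : k = k0
      · rw [hkk]; exact a0
      by_cases hmk : m k = 0
      · rw [hmk]; exact zero_mem _
      exfalso
      have e1 : v 0 * k + v 1 = 0 := by
        have := h k hk
        rw [h2, zero_mul, add_zero] at this
        exact (mul_eq_zero.1 this).resolve_right hmk
      have e2 : v 0 * ((k : K) - k0) = 0 := by linear_combination e1 - e0
      have e3 : v 0 = 0 := (mul_eq_zero.1 e2).resolve_right
        (sub_ne_zero.2 (by exact_mod_cast hkk))
      have e4 : v 1 = 0 := by rw [e3] at e0; simpa using e0
      apply hv
      funext i
      fin_cases i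
      · exact e3
      · exact e4
      · exact h2
    · push Not at hex
      refine ⟨![m d, 0, 0], fun k hk => ?_⟩
      rcases hk.eq_or_lt with rfl | hk
      · exact IntermediateField.subset_adjoin _ _ ⟨0, rfl⟩
      · rw [hex k hk]; exact zero_mem _
  · refine ⟨![m 0, v 0 / v 2, v 1 / v 2], fun k => ?_⟩
    set F := IntermediateField.adjoin ℂ (Set.range ![m 0, v 0 / v 2, v 1 / v 2]) with hF
    have a0 : m 0 ∈ F := IntermediateField.subset_adjoin _ _ ⟨0, rfl⟩
    have a1 : v 0 / v 2 ∈ F := IntermediateField.subset_adjoin _ _ ⟨1, rfl⟩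
    have a2 : v 1 / v 2 ∈ F := IntermediateField.subset_adjoin _ _ ⟨2, rfl⟩
    induction k with
    | zero => intro _; exact a0
    | succ k ih =>
      intro hk
      have e : m (k + 1) = -((v 0 / v 2 * k + v 1 / v 2) * m k) := by
        have := h k (by omega)
        field_simp
        linear_combination this
      rw [e]
      exact neg_mem (mul_mem (add_mem (mul_mem a1 (natCast_mem F k)) a2) (ih (by omega)))

theorem gamma_trdeg_le {K : Type} [Field K] [Algebra ℂ K] (x : Fin 3 → K) :
    Algebra.trdeg ℂ (IntermediateField.adjoin ℂ (Set.range x)) ≤ 3 := by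
  have hfs : FaithfulSMul ℂ (Algebra.adjoin ℂ (Set.range x)) :=
    (faithfulSMul_iff_algebraMap_injective _ _).2 (algebraMap ℂ _).injective
  open scoped IntermediateField.algebraAdjoinAdjoin in
  have h1 := trdeg_add_eq ℂ (Algebra.adjoin ℂ (Set.range x))
    (A := IntermediateField.adjoin ℂ (Set.range x))
  open scoped IntermediateField.algebraAdjoinAdjoin in
  have h2 : Algebra.trdeg (Algebra.adjoin ℂ (Set.range x))
    (IntermediateField.adjoin ℂ (Set.range x)) = 0 := trdeg_eq_zero
  rw [← h1, h2, add_zero, Algebra.adjoin_range_eq_range_aeval]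
  refine (trdeg_le_of_surjective (aeval (R := ℂ) x).rangeRestrict
    (AlgHom.rangeRestrict_surjective _)).trans ?_
  rw [MvPolynomial.trdeg_of_isDomain]
  simp

theorem gamma_dim_le_of_integral {R S : Type} [CommRing R] [CommRing S] (f : R →+* S)
    (hf : f.IsIntegral) : ringKrullDim S ≤ ringKrullDim R := by
  algebraize [f]
  refine Order.krullDim_le_of_strictMono (fun I => PrimeSpectrum.comap f I) ?_
  intro I J hIJ
  exact Ideal.IsIntegral.comap_lt_comap (R := R) (I := I.asIdeal) (J := J.asIdeal) hIJ

theorem gamma_det_mem (d : ℕ) (s : Fin 3 → Fin d) (hs : StrictMono s) :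
    ((gammaMatrix d).submatrix id s).det ∈ gammaIdeal d :=
  Ideal.subset_span ⟨s, hs, rfl⟩

theorem gamma_upper (d : ℕ) [Nontrivial (MvPolynomial (Fin (d + 1)) ℂ ⧸ gammaIdeal d)] :
    ringKrullDim (MvPolynomial (Fin (d + 1)) ℂ ⧸ gammaIdeal d) ≤ 3 := by
  obtain ⟨s, g, hinj, hgint⟩ := exists_integral_inj_algHom_of_fg ℂ
    (MvPolynomial (Fin (d + 1)) ℂ ⧸ gammaIdeal d)
  refine (gamma_dim_le_of_integral g.toRingHom hgint).trans ?_
  rw [MvPolynomial.ringKrullDim_of_isNoetherianRing, ringKrullDim_eq_zero_of_field, zero_add,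
    Nat.card_fin]
  suffices s ≤ 3 by exact_mod_cast this
  obtain ⟨q, hq⟩ := RingHom.IsIntegral.comap_surjective hgint hinj ⊥
  let Q := (MvPolynomial (Fin (d + 1)) ℂ ⧸ gammaIdeal d) ⧸ q.asIdeal
  let K := FractionRing Q
  let ψ : (MvPolynomial (Fin (d + 1)) ℂ ⧸ gammaIdeal d) →ₐ[ℂ] K :=
    (IsScalarTower.toAlgHom ℂ Q K).comp (Ideal.Quotient.mkₐ ℂ q.asIdeal)
  have hψ : ∀ a, ψ a = 0 → a ∈ q.asIdeal := by
    intro a ha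
    have h1 : algebraMap Q K (Ideal.Quotient.mk q.asIdeal a) = 0 := ha
    rw [← map_zero (algebraMap Q K)] at h1
    exact Ideal.Quotient.eq_zero_iff_mem.1 (IsFractionRing.injective Q K h1)
  have hgψ : Function.Injective (ψ.comp g) := by
    rw [injective_iff_map_eq_zero]
    intro p hp
    have h1 : p ∈ (PrimeSpectrum.comap g.toRingHom q).asIdeal := hψ _ hp
    rw [hq] at h1
    exact h1
  let θ : MvPolynomial (Fin (d + 1)) ℂ →ₐ[ℂ] K :=
    ψ.comp (Ideal.Quotient.mkₐ ℂ (gammaIdeal d))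
  have hθ : ∀ p ∈ gammaIdeal d, θ p = 0 := by
    intro p hp
    have : Ideal.Quotient.mk (gammaIdeal d) p = 0 := Ideal.Quotient.eq_zero_iff_mem.2 hp
    change ψ (Ideal.Quotient.mk (gammaIdeal d) p) = 0
    rw [this, map_zero]
  obtain ⟨v, hv, hker⟩ := gamma_left_kernel ((gammaMatrix d).map θ) (by
    intro t ht
    have := hθ _ (gamma_det_mem d t ht)
    rw [AlgHom.map_det] at this
    exact this)
  let m : ℕ → K := fun k => if hk : k < d + 1 then θ (X ⟨k, hk⟩) else 0
  have hm : ∀ k (hk : k < d + 1), m k = θ (X ⟨k, hk⟩) := fun k hk => dif_pos hk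
  obtain ⟨x, hx⟩ := gamma_three_gens d m v hv (by
    intro c hc
    have := hker ⟨c, hc⟩
    rw [Fin.sum_univ_three] at this
    simp [gammaMatrix] at this
    rw [hm c (by omega), hm (c + 1) (by omega)]
    linear_combination this)
  have hθF : ∀ p, θ p ∈ IntermediateField.adjoin ℂ (Set.range x) := by
    intro p
    induction p using MvPolynomial.induction_on with
    | C a =>
      have : θ (C a) = algebraMap ℂ K a := θ.commutes a
      rw [this]
      exact IntermediateField.algebraMap_mem _ a
    | add p q hp hq => rw [map_add]; exact add_mem hp hq
    | mul_X p i hp =>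
      rw [map_mul]
      refine mul_mem hp ?_
      have := hx i.1 (by omega)
      rw [hm _ i.2] at this
      exact this
  have hψF : ∀ a, ψ a ∈ (IntermediateField.adjoin ℂ (Set.range x)).toSubalgebra := by
    intro a
    obtain ⟨p, rfl⟩ := Ideal.Quotient.mk_surjective a
    exact hθF p
  let η : MvPolynomial (Fin s) ℂ →ₐ[ℂ] IntermediateField.adjoin ℂ (Set.range x) :=
    (ψ.comp g).codRestrict _ (fun p => hψF (g p))
  have hη : Function.Injective η := fun p p' h => hgψ (congrArg Subtype.val h)
  have h1 := (trdeg_le_of_injective η hη).trans (gamma_trdeg_le x)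
  rw [MvPolynomial.trdeg_of_isDomain] at h1
  simpa using h1

/-- Rational parametrisation `m_k = z ∏_{j<k} (j x + y)`. -/
noncomputable def gammaParam {R : Type} [CommRing R] [Algebra ℂ R] (d : ℕ) (x y z : R) :
    MvPolynomial (Fin (d + 1)) ℂ →ₐ[ℂ] R :=
  aeval fun k => z * ∏ j ∈ Finset.range k.1, ((j : R) * x + y)

theorem gammaParam_X {R : Type} [CommRing R] [Algebra ℂ R] (d : ℕ) (x y z : R)
    (k : Fin (d + 1)) :
    gammaParam d x y z (X k) = z * ∏ j ∈ Finset.range k.1, ((j : R) * x + y) := by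
  simp [gammaParam]

theorem gammaParam_comp {R : Type} [CommRing R] [Algebra ℂ R] (d : ℕ) (x y z : R)
    (e : R →ₐ[ℂ] R) : e.comp (gammaParam d x y z) = gammaParam d (e x) (e y) (e z) := by
  ext k
  simp [gammaParam_X]

theorem gammaParam_ideal {R : Type} [CommRing R] [IsDomain R] [Algebra ℂ R] (d : ℕ) (x y z : R) :
    ∀ p ∈ gammaIdeal d, gammaParam d x y z p = 0 := by
  suffices gammaIdeal d ≤ RingHom.ker (gammaParam d x y z) from fun p hp => this hp
  refine Ideal.span_le.2 ?_
  rintro _ ⟨s, -, rfl⟩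
  change gammaParam d x y z _ = 0
  rw [AlgHom.map_det]
  refine Matrix.exists_vecMul_eq_zero_iff.1 ⟨![x, y, -1], ?_, ?_⟩
  · intro h
    have := congrFun h 2
    simp at this
  · funext c
    simp [Matrix.vecMul, dotProduct, Fin.sum_univ_three, gammaMatrix, gammaParam_X,
      Finset.prod_range_succ]
    ring

/-- The parametrisation on the quotient. -/
noncomputable def gammaLift {R : Type} [CommRing R] [IsDomain R] [Algebra ℂ R] (d : ℕ)
    (x y z : R) : (MvPolynomial (Fin (d + 1)) ℂ ⧸ gammaIdeal d) →ₐ[ℂ] R :=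
  Ideal.Quotient.liftₐ (gammaIdeal d) (gammaParam d x y z) (gammaParam_ideal d x y z)

theorem gammaLift_mk {R : Type} [CommRing R] [IsDomain R] [Algebra ℂ R] (d : ℕ)
    (x y z : R) (p : MvPolynomial (Fin (d + 1)) ℂ) :
    gammaLift d x y z (Ideal.Quotient.mk _ p) = gammaParam d x y z p := rfl

theorem gammaLift_ker_lt {R : Type} [CommRing R] [IsDomain R] [Algebra ℂ R] (d : ℕ)
    (x y z x' y' z' : R) (e : R →ₐ[ℂ] R) (hx : e x = x') (hy : e y = y') (hz : e z = z')
    (p : MvPolynomial (Fin (d + 1)) ℂ)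
    (h0 : gammaParam d x y z p ≠ 0) (h1 : gammaParam d x' y' z' p = 0) :
    RingHom.ker (gammaLift d x y z) < RingHom.ker (gammaLift d x' y' z') := by
  subst hx hy hz
  refine lt_of_le_of_ne ?_ ?_
  · intro a ha
    obtain ⟨q, rfl⟩ := Ideal.Quotient.mk_surjective a
    rw [RingHom.mem_ker, gammaLift_mk] at ha ⊢
    rw [← gammaParam_comp, AlgHom.comp_apply, ha, map_zero]
  · intro h
    have : Ideal.Quotient.mk (gammaIdeal d) p ∈ RingHom.ker (gammaLift d (e x) (e y) (e z)) := h1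
    rw [← h] at this
    exact h0 this

theorem gamma_lower_aux {R : Type} [CommRing R] [IsDomain R] [Algebra ℂ R] (d : ℕ) (hd : 3 ≤ d)
    (x y z : R) (hx : x ≠ 0) (hy : y ≠ 0) (hz : z ≠ 0) (e : R → R → R → R →ₐ[ℂ] R)
    (ex : ∀ a b c, e a b c x = a) (ey : ∀ a b c, e a b c y = b) (ez : ∀ a b c, e a b c z = c) :
    3 ≤ ringKrullDim (MvPolynomial (Fin (d + 1)) ℂ ⧸ gammaIdeal d) := by
  have l1 : RingHom.ker (gammaLift d x y z) < RingHom.ker (gammaLift d 0 y z) := by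
    refine gammaLift_ker_lt d x y z 0 y z (e 0 y z) (ex _ _ _) (ey _ _ _) (ez _ _ _)
      (X ⟨0, by omega⟩ * X ⟨2, by omega⟩ - X ⟨1, by omega⟩ ^ 2) ?_ ?_
    · simp only [map_sub, map_mul, map_pow, gammaParam_X, Finset.prod_range_succ,
        Finset.prod_range_zero]
      have : z ^ 2 * y * x ≠ 0 := mul_ne_zero (mul_ne_zero (pow_ne_zero _ hz) hy) hx
      intro h
      apply this
      push_cast at h
      linear_combination h
    · simp only [map_sub, map_mul, map_pow, gammaParam_X, Finset.prod_range_succ,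
        Finset.prod_range_zero]
      ring
  have l2 : RingHom.ker (gammaLift d 0 y z) < RingHom.ker (gammaLift d 0 0 z) := by
    refine gammaLift_ker_lt d 0 y z 0 0 z (e 0 0 z) (map_zero _) (ey _ _ _) (ez _ _ _)
      (X ⟨1, by omega⟩) ?_ ?_
    · simp [gammaParam_X, hy, hz]
    · simp [gammaParam_X]
  have l3 : RingHom.ker (gammaLift d 0 0 z) < RingHom.ker (gammaLift d 0 0 (0 : R)) := by
    refine gammaLift_ker_lt d 0 0 z 0 0 0 (e 0 0 0) (map_zero _) (map_zero _) (ez _ _ _)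
      (X ⟨0, by omega⟩) ?_ ?_
    · simp [gammaParam_X, hz]
    · simp [gammaParam_X]
  have p0 := RingHom.ker_isPrime (gammaLift d x y z)
  have p1 := RingHom.ker_isPrime (gammaLift d 0 y z)
  have p2 := RingHom.ker_isPrime (gammaLift d 0 0 z)
  have p3 := RingHom.ker_isPrime (gammaLift d 0 0 (0 : R))
  have h1 := Ideal.height_add_one_le_of_lt_of_isPrime l1
  have h2 := Ideal.height_add_one_le_of_lt_of_isPrime l2
  have h3 := Ideal.height_add_one_le_of_lt_of_isPrime l3
  have h : (3 : ℕ∞) ≤ (RingHom.ker (gammaLift d 0 0 (0 : R))).height := by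
    refine le_trans ?_ h3
    refine le_trans ?_ (add_le_add_left h2 1)
    refine le_trans ?_ (add_le_add_left (add_le_add_left h1 1) 1)
    refine le_trans ?_ (add_le_add_left (add_le_add_left (add_le_add_left (zero_le) 1) 1) 1)
    norm_num
  refine le_trans ?_ (Ideal.height_le_ringKrullDim_of_isPrime
    (I := RingHom.ker (gammaLift d 0 0 (0 : R))))
  exact WithBot.coe_le_coe.2 h

theorem gamma_lower (d : ℕ) (hd : 3 ≤ d) :
    3 ≤ ringKrullDim (MvPolynomial (Fin (d + 1)) ℂ ⧸ gammaIdeal d) := by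
  refine gamma_lower_aux (R := MvPolynomial (Fin 3) ℂ) d hd (X 0) (X 1) (X 2) (X_ne_zero _)
    (X_ne_zero _) (X_ne_zero _) (fun a b c => aeval ![a, b, c]) ?_ ?_ ?_
  · intro a b c; rw [aeval_X]; rfl
  · intro a b c; rw [aeval_X]; rfl
  · intro a b c; rw [aeval_X]; rfl

/-- For `d ≥ 3`, the quotient ring `ℂ[m₀,…,m_d]/I₃(G)` has Krull dimension `3`. -/
theorem gamma_krullDim (d : ℕ) (hd : 3 ≤ d) :
    ringKrullDim (MvPolynomial (Fin (d + 1)) ℂ ⧸ gammaIdeal d) = 3 := by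
  have : Nontrivial (MvPolynomial (Fin (d + 1)) ℂ ⧸ gammaIdeal d) :=
    (gammaLift d (0 : ℂ) 0 0).toRingHom.domain_nontrivial
  exact le_antisymm (gamma_upper d) (gamma_lower d hd)
end

section
/- Let d ≥ 3 and let I = I_3(G) ⊆ S = ℂ[m_0,…,m_d]. For every natural number n, the dimension over ℂ of the n-th graded piece of S/I equals C(n+2,2) + (d−2)·C(n+1,2) + C(d−1,2)·C(n,2), where C(a,b) denotes the binomial coefficient (with C(a,b) = 0 when a < b). Equivalently, the Hilbert series of S/I is (1 + (d−2)t + C(d−1,2)t²)/(1−t)³; in particular S/I has degree C(d,2). -/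
open MvPolynomial

/-- Rising factorial polynomial. -/
noncomputable def gP (c : ℕ) : Polynomial ℂ :=
  ∏ i ∈ Finset.range c, (Polynomial.X + Polynomial.C (i : ℂ))

lemma gP_succ (c : ℕ) : gP (c + 1) = gP c * (Polynomial.X + Polynomial.C (c : ℂ)) := by
  simp [gP, Finset.prod_range_succ]

lemma gP_zero : gP 0 = 1 := by simp [gP]

lemma gP_dvd {k c : ℕ} (h : k < c) : (Polynomial.X + Polynomial.C (k : ℂ)) ∣ gP c :=
  Finset.dvd_prod_of_mem _ (Finset.mem_range.mpr h)

lemma gP_eval_ne {k c : ℕ} (h : c ≤ k) : (gP c).eval (-(k : ℂ)) ≠ 0 := by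
  rw [gP, Polynomial.eval_prod, Finset.prod_ne_zero_iff]
  intro i hi
  rw [Finset.mem_range] at hi
  simp only [Polynomial.eval_add, Polynomial.eval_X, Polynomial.eval_C]
  intro h0
  have : (i : ℂ) = (k : ℂ) := by linear_combination h0
  have := Nat.cast_injective this
  omega

noncomputable def gPhi (d : ℕ) :
    MvPolynomial (Fin (d + 1)) ℂ →ₐ[ℂ] Polynomial (Polynomial ℂ) :=
  aeval (fun c => Polynomial.monomial c.val (gP c.val))

lemma gamma_det (d : ℕ) (s : Fin 3 → Fin d) :
    ((gammaMatrix d).submatrix id s).det =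
      C ((s 1 : ℂ) - (s 2 : ℂ)) * (X (s 0).succ * X (s 1).castSucc * X (s 2).castSucc)
      + C ((s 2 : ℂ) - (s 0 : ℂ)) * (X (s 0).castSucc * X (s 1).succ * X (s 2).castSucc)
      + C ((s 0 : ℂ) - (s 1 : ℂ)) * (X (s 0).castSucc * X (s 1).castSucc * X (s 2).succ) := by
  have h1 : ∀ c : Fin d, (⟨c.val, by have := c.isLt; omega⟩ : Fin (d + 1)) = c.castSucc :=
    fun c => rfl
  have h2 : ∀ c : Fin d, (⟨c.val + 1, by have := c.isLt; omega⟩ : Fin (d + 1)) = c.succ :=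
    fun c => rfl
  rw [Matrix.det_fin_three]
  simp only [gammaMatrix, Matrix.submatrix_apply, Matrix.of_apply, id, h1, h2, C_sub,
    Matrix.cons_val_zero, Matrix.cons_val_one, Matrix.cons_val]
  ring

lemma gPhi_det (d : ℕ) (s : Fin 3 → Fin d) :
    gPhi d (((gammaMatrix d).submatrix id s).det) = 0 := by
  rw [gamma_det]
  have hC : ∀ z : ℂ, gPhi d (C z) = Polynomial.C (Polynomial.C z) := by
    intro z
    rw [← MvPolynomial.algebraMap_eq, AlgHom.commutes]
    rfl
  have hX : ∀ c, gPhi d (X c) = Polynomial.C (gP c.val) * Polynomial.X ^ c.val := by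
    intro c
    rw [Polynomial.C_mul_X_pow_eq_monomial]
    simp [gPhi]
  simp only [map_add, map_mul, hC, hX, Fin.val_succ, Fin.val_castSucc, gP_succ]
  simp only [map_sub, pow_succ]
  ring

lemma gPhi_ideal (d : ℕ) {x : MvPolynomial (Fin (d + 1)) ℂ} (hx : x ∈ gammaIdeal d) :
    gPhi d x = 0 := by
  have : gammaIdeal d ≤ RingHom.ker (gPhi d) := by
    rw [gammaIdeal, Ideal.span_le]
    rintro p ⟨s, -, rfl⟩
    exact gPhi_det d s
  exact this hx

lemma gamma_li_aux {ι : Type*} (f h : ι → Polynomial ℂ) (w B k : ι → ℕ)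
    (hinj : ∀ i j, w i = w j → B i = B j → k i = k j → i = j)
    (hf : ∀ i, f i = (Polynomial.X + Polynomial.C (k i : ℂ)) ^ B i * h i)
    (hh : ∀ i, (h i).eval (-(k i : ℂ)) ≠ 0)
    (hd : ∀ i j, (B i < B j ∨ (B i = B j ∧ k i < k j)) →
      (Polynomial.X + Polynomial.C (k i : ℂ)) ^ (B i + 1) ∣ f j) :
    LinearIndependent ℂ (fun i => Polynomial.monomial (w i) (f i)) := by
  classical
  rw [linearIndependent_iff']
  intro s c hs
  by_contra! hne
  obtain ⟨i1, hi1, hc1⟩ := hne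
  let t := s.filter (fun i => c i ≠ 0)
  have ht : t.Nonempty := ⟨i1, by simp [t, hi1, hc1]⟩
  obtain ⟨i, hit, hmin⟩ := Finset.exists_min_image t (fun i => toLex (B i, k i)) ht
  have his : i ∈ s := (Finset.mem_filter.mp hit).1
  have hci : c i ≠ 0 := (Finset.mem_filter.mp hit).2
  have hco := congrArg (fun p => Polynomial.coeff p (w i)) hs
  simp only [Polynomial.finsetSum_coeff, Polynomial.coeff_smul, Polynomial.coeff_monomial,
    Polynomial.coeff_zero] at hco
  rw [← Finset.add_sum_erase _ _ his] at hco
  have hdv : (Polynomial.X + Polynomial.C (k i : ℂ)) ^ (B i + 1) ∣ c i • f i := by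
    have hdv2 : (Polynomial.X + Polynomial.C (k i : ℂ)) ^ (B i + 1) ∣
        ∑ x ∈ s.erase i, c x • (if w x = w i then f x else 0) := by
      refine Finset.dvd_sum fun j hj => ?_
      have hji := Finset.ne_of_mem_erase hj
      have hjs := Finset.mem_of_mem_erase hj
      by_cases hcj : c j = 0
      · simp [hcj]
      split_ifs with hw
      · refine (hd i j ?_).trans (by rw [Polynomial.smul_eq_C_mul]; exact dvd_mul_left _ _)
        have hle := hmin j (Finset.mem_filter.mpr ⟨hjs, hcj⟩)
        rw [Prod.Lex.toLex_le_toLex] at hle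
        simp only at hle
        rcases hle with hle | ⟨h1, h2⟩
        · exact Or.inl hle
        · refine Or.inr ⟨h1, lt_of_le_of_ne h2 fun h3 => hji ?_⟩
          exact (hinj i j hw.symm h1 h3).symm
      · simp
    rw [if_pos rfl] at hco
    rw [eq_neg_of_add_eq_zero_left hco]
    exact (dvd_neg).mpr hdv2
  rw [Polynomial.smul_eq_C_mul, hf i, pow_succ, mul_left_comm] at hdv
  have hX0 : (Polynomial.X + Polynomial.C (k i : ℂ)) ^ B i ≠ 0 :=
    pow_ne_zero _ (Polynomial.X_add_C_ne_zero _)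
  have hdv3 := (mul_dvd_mul_iff_left hX0).mp hdv
  obtain ⟨q, hq⟩ := hdv3
  have := congrArg (Polynomial.eval (-(k i : ℂ))) hq
  simp at this
  rcases this with h | h
  · exact hci h
  · exact hh i h

/-- parameters of a standard monomial: `x_0^A x_d^B x_k^e x_a^g`. -/
structure GPar (d : ℕ) where
  A : ℕ
  B : ℕ
  e : ℕ
  g : ℕ
  k : Fin (d + 1)
  a : Fin (d + 1)

def GPar.Valid {d : ℕ} (n : ℕ) (p : GPar d) : Prop :=
  p.A + p.B + p.e + p.g = n ∧
  ((p.k.val = 0 ∧ p.e = 0 ∧ p.a.val = 0 ∧ p.g = 0) ∨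
   (1 ≤ p.k.val ∧ p.k.val < d ∧ p.e = 1 ∧ p.a.val = 0 ∧ p.g = 0) ∨
   (1 ≤ p.k.val ∧ p.k.val < d ∧ 1 ≤ p.e ∧ 1 ≤ p.a.val ∧ p.a.val ≤ p.k.val ∧ p.g = 1))

noncomputable def GPar.mon {d : ℕ} (p : GPar d) : Fin (d + 1) →₀ ℕ :=
  Finsupp.single 0 p.A + Finsupp.single (Fin.last d) p.B + Finsupp.single p.k p.e
    + Finsupp.single p.a p.g

lemma GPar.ext' {d n : ℕ} {p q : GPar d} (hp : p.Valid n) (hq : q.Valid n)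
    (hw : d * p.B + p.k.val * p.e + p.a.val = d * q.B + q.k.val * q.e + q.a.val)
    (hB : p.B = q.B) (hk : p.k.val = q.k.val) : p = q := by
  obtain ⟨A, B, e, g, k, a⟩ := p
  obtain ⟨A', B', e', g', k', a'⟩ := q
  simp only [GPar.Valid] at *
  subst hB
  have hk' : k = k' := Fin.ext hk
  subst hk'
  have hw' : k.val * e + a.val = k.val * e' + a'.val := by omega
  have hee : e = e' := by
    obtain ⟨-, hp⟩ := hp
    obtain ⟨-, hq⟩ := hq
    rcases lt_trichotomy e e' with h | h | h
    · exfalso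
      obtain ⟨c, rfl⟩ := Nat.exists_eq_add_of_lt h
      have : k.val * (e + c + 1) = k.val * e + k.val * c + k.val := by ring
      have h2 : 1 ≤ c → k.val ≤ k.val * c := fun hc => Nat.le_mul_of_pos_right _ hc
      have := Nat.zero_le (k.val * c)
      omega
    · exact h
    · exfalso
      obtain ⟨c, rfl⟩ := Nat.exists_eq_add_of_lt h
      have : k.val * (e' + c + 1) = k.val * e' + k.val * c + k.val := by ring
      have h2 : 1 ≤ c → k.val ≤ k.val * c := fun hc => Nat.le_mul_of_pos_right _ hc
      have := Nat.zero_le (k.val * c)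
      omega
  subst hee
  have haa : a = a' := Fin.ext (by omega)
  subst haa
  have : g = g' := by omega
  subst this
  have : A = A' := by omega
  subst this
  rfl

lemma gPhi_mon {d n : ℕ} (p : GPar d) (hp : p.Valid n) :
    gPhi d (monomial p.mon 1) =
      Polynomial.monomial (d * p.B + p.k.val * p.e + p.a.val)
        (gP d ^ p.B * gP p.k.val ^ p.e * gP p.a.val) := by
  have hag : gP p.a.val ^ p.g = gP p.a.val := by
    rcases hp.2 with h | h | h
    · rw [h.2.2.2, h.2.2.1, gP_zero, pow_zero]
    · rw [h.2.2.2.2, h.2.2.2.1, gP_zero, pow_zero]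
    · rw [h.2.2.2.2.2, pow_one]
  have hag' : p.a.val * p.g = p.a.val := by
    rcases hp.2 with h | h | h
    · rw [h.2.2.1, zero_mul]
    · rw [h.2.2.2.1, zero_mul]
    · rw [h.2.2.2.2.2, mul_one]
  have h1 : (monomial p.mon (1 : ℂ)) = X 0 ^ p.A * X (Fin.last d) ^ p.B * X p.k ^ p.e
      * X p.a ^ p.g := by
    simp only [GPar.mon, X_pow_eq_monomial, monomial_mul, mul_one]
  rw [h1]
  simp only [map_mul, map_pow, gPhi, aeval_X, Polynomial.monomial_pow,
    Polynomial.monomial_mul_monomial, hag, hag', Fin.val_zero, Fin.val_last, gP_zero, one_pow,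
    zero_mul, zero_add, one_mul]

lemma gamma_li {d n : ℕ} {ι : Type*} (hd : 1 ≤ d) (p : ι → GPar d) (hp : ∀ i, (p i).Valid n)
    (hinj : Function.Injective p) :
    LinearIndependent ℂ (fun i => gPhi d (monomial (p i).mon 1)) := by
  simp only [gPhi_mon _ (hp _)]
  have hkd : ∀ i, (p i).k.val < d := by
    intro i
    rcases (hp i).2 with h | h | h <;> omega
  have hak : ∀ i, (p i).a.val ≤ (p i).k.val := by
    intro i
    rcases (hp i).2 with h | h | h <;> omega
  have hfac : ∀ k, k < d → ∃ q : Polynomial ℂ,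
      gP d = (Polynomial.X + Polynomial.C (k : ℂ)) * q ∧ q.eval (-(k : ℂ)) ≠ 0 := by
    intro k hk
    refine ⟨∏ i ∈ (Finset.range d).erase k, (Polynomial.X + Polynomial.C (i : ℂ)), ?_, ?_⟩
    · rw [gP, Finset.mul_prod_erase (Finset.range d)
        (fun i => Polynomial.X + Polynomial.C (i : ℂ)) (Finset.mem_range.mpr hk)]
    · rw [Polynomial.eval_prod, Finset.prod_ne_zero_iff]
      intro i hi
      have hne := Finset.ne_of_mem_erase hi
      simp only [Polynomial.eval_add, Polynomial.eval_X, Polynomial.eval_C]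
      intro h0
      have : (i : ℂ) = (k : ℂ) := by linear_combination h0
      exact hne (Nat.cast_injective this)
  choose! q hq1 hq2 using hfac
  refine gamma_li_aux _ (fun i => q (p i).k.val ^ (p i).B * gP (p i).k.val ^ (p i).e
    * gP (p i).a.val) _ (fun i => (p i).B) (fun i => (p i).k.val) ?_ ?_ ?_ ?_
  · intro i j hw hB hk
    exact hinj (GPar.ext' (hp i) (hp j) hw hB hk)
  · intro i
    conv_lhs => rw [hq1 _ (hkd i)]
    rw [mul_pow]
    ring
  · intro i
    simp only [Polynomial.eval_mul, Polynomial.eval_pow]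
    exact mul_ne_zero (mul_ne_zero (pow_ne_zero _ (hq2 _ (hkd i)))
      (pow_ne_zero _ (gP_eval_ne le_rfl))) (gP_eval_ne (hak i))
  · intro i j hij
    rcases hij with h | ⟨h1, h2⟩
    · refine Dvd.dvd.mul_right (Dvd.dvd.mul_right ?_ _) _
      exact (pow_dvd_pow _ h).trans (pow_dvd_pow_of_dvd (gP_dvd (hkd i)) _)
    · refine Dvd.dvd.mul_right ?_ _
      rw [pow_succ]
      refine mul_dvd_mul ?_ ?_
      · rw [h1]
        exact pow_dvd_pow_of_dvd (gP_dvd (hkd i)) _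
      · have he : (p j).e ≠ 0 := by
          rcases (hp j).2 with h | h | h <;> omega
        exact (gP_dvd h2).trans (dvd_pow_self _ he)

abbrev GIdx (d n : ℕ) : Type :=
  Fin (n + 1) ⊕ (Fin n × Fin (d - 1)) ⊕ ((Σ v : Fin n, Fin v.val) × (Σ k : Fin d, Fin k.val))

def GIdx.par {d n : ℕ} : GIdx d n → GPar d
  | .inl B => ⟨n - B.val, B.val, 0, 0, 0, 0⟩
  | .inr (.inl (B, k)) =>
      ⟨n - 1 - B.val, B.val, 1, 0, ⟨k.val + 1, by have := k.isLt; omega⟩, 0⟩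
  | .inr (.inr (⟨v, u⟩, ⟨k, a⟩)) =>
      ⟨n - 1 - v.val, u.val, v.val - u.val, 1, ⟨k.val, by have := k.isLt; omega⟩,
        ⟨a.val + 1, by have := k.isLt; have := a.isLt; omega⟩⟩

lemma GIdx.par_valid {d n : ℕ} (i : GIdx d n) : i.par.Valid n := by
  rcases i with B | ⟨B, k⟩ | ⟨⟨v, u⟩, ⟨k, a⟩⟩
  · have := B.isLt
    simp only [GIdx.par, GPar.Valid, Fin.val_zero]
    refine ⟨?_, Or.inl ⟨?_, ?_, ?_, ?_⟩⟩ <;> first | trivial | omega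
  · have := B.isLt
    have := k.isLt
    simp only [GIdx.par, GPar.Valid, Fin.val_zero]
    refine ⟨?_, Or.inr (Or.inl ⟨?_, ?_, ?_, ?_, ?_⟩)⟩ <;> first | trivial | omega
  · have := u.isLt
    have := v.isLt
    have := k.isLt
    have := a.isLt
    simp only [GIdx.par, GPar.Valid]
    refine ⟨?_, Or.inr (Or.inr ⟨?_, ?_, ?_, ?_, ?_, ?_⟩)⟩ <;> first | trivial | omega

lemma GIdx.par_inj {d n : ℕ} : Function.Injective (GIdx.par : GIdx d n → GPar d) := by
  rintro (B | ⟨B, k⟩ | ⟨⟨v, u⟩, ⟨k, a⟩⟩) (B' | ⟨B', k'⟩ | ⟨⟨v', u'⟩, ⟨k', a'⟩⟩) h <;>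
    simp only [GIdx.par, GPar.mk.injEq, Fin.mk.injEq] at h
  · have : B = B' := Fin.ext h.2.1
    rw [this]
  · omega
  · omega
  · omega
  · have h1 : B = B' := Fin.ext h.2.1
    have h2 : k = k' := Fin.ext (by omega)
    rw [h1, h2]
  · omega
  · omega
  · omega
  · have := u.isLt
    have := v.isLt
    have := u'.isLt
    have := v'.isLt
    have h1 : v = v' := Fin.ext (by omega)
    subst h1
    have h2 : u = u' := Fin.ext (by omega)
    have h3 : k = k' := Fin.ext (by omega)
    subst h3
    have h4 : a = a' := Fin.ext (by omega)
    rw [h2, h4]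

lemma GIdx.par_surj {d n : ℕ} (p : GPar d) (hp : p.Valid n) : ∃ i : GIdx d n, i.par = p := by
  obtain ⟨A, B, e, g, k, a⟩ := p
  simp only [GPar.Valid] at hp
  obtain ⟨hs, h | h | h⟩ := hp
  · refine ⟨.inl ⟨B, by omega⟩, ?_⟩
    simp only [GIdx.par, GPar.mk.injEq, Fin.ext_iff, Fin.val_zero]
    refine ⟨?_, ?_, ?_, ?_, ?_, ?_⟩ <;> first | trivial | omega
  · refine ⟨.inr (.inl (⟨B, by omega⟩, ⟨k.val - 1, by omega⟩)), ?_⟩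
    simp only [GIdx.par, GPar.mk.injEq, Fin.ext_iff, Fin.val_zero]
    refine ⟨?_, ?_, ?_, ?_, ?_, ?_⟩ <;> first | trivial | omega
  · refine ⟨.inr (.inr (⟨⟨B + e, by omega⟩, ⟨B, by simp only; omega⟩⟩,
      ⟨⟨k.val, by omega⟩, ⟨a.val - 1, by simp only; omega⟩⟩)), ?_⟩
    simp only [GIdx.par, GPar.mk.injEq, Fin.ext_iff]
    refine ⟨?_, ?_, ?_, ?_, ?_, ?_⟩ <;> first | trivial | omega

lemma card_sigma_fin (n : ℕ) : Fintype.card (Σ v : Fin n, Fin v.val) = n.choose 2 := by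
  rw [Fintype.card_sigma]
  simp only [Fintype.card_fin]
  rw [Fin.sum_univ_eq_sum_range (fun i => i) n, Finset.sum_range_id, Nat.choose_two_right]

lemma GIdx.card (d n : ℕ) (hd : 3 ≤ d) : Fintype.card (GIdx d n) =
    Nat.choose (n + 2) 2 + (d - 2) * Nat.choose (n + 1) 2
        + Nat.choose (d - 1) 2 * Nat.choose n 2 := by
  rw [Fintype.card_sum, Fintype.card_sum, Fintype.card_prod, Fintype.card_prod,
    card_sigma_fin, card_sigma_fin]
  simp only [Fintype.card_fin]
  obtain ⟨m, rfl⟩ : ∃ m, d = m + 2 := ⟨d - 2, by omega⟩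
  have h1 : ∀ m : ℕ, (m + 1).choose 2 = m + m.choose 2 := by
    intro m
    rw [Nat.choose_succ_succ' m 1, Nat.choose_one_right]
  have e1 : m + 2 - 1 = m + 1 := rfl
  have e2 : m + 2 - 2 = m := rfl
  rw [e1, e2, h1 (n + 1), h1 n, h1 (m + 1)]
  ring

lemma GPar.degree_mon {d : ℕ} (p : GPar d) : p.mon.degree = p.A + p.B + p.e + p.g := by
  simp [GPar.mon]

lemma gamma_nonstd {d : ℕ} (s : Fin (d + 1) →₀ ℕ) (a j k : Fin (d + 1)) (ha : 0 < a.val)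
    (haj : a ≤ j) (hjk : j < k) (hk : k.val < d)
    (h1 : s a ≠ 0) (h2 : (s - Finsupp.single a 1 : Fin (d + 1) →₀ ℕ) j ≠ 0) (h3 : s k ≠ 0) :
    ∃ i j k : Fin d, i < j ∧ j < k ∧ ∃ t : Fin (d + 1) →₀ ℕ,
        s = t + (Finsupp.single i.succ 1 + Finsupp.single j.castSucc 1
          + Finsupp.single k.castSucc 1) := by
  have haj' : a.val ≤ j.val := haj
  have hjk' : j.val < k.val := hjk
  refine ⟨⟨a.val - 1, by omega⟩, ⟨j.val, by omega⟩, ⟨k.val, hk⟩, ?_, hjk, ?_⟩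
  · rw [Fin.lt_def]
    simp only
    omega
  have e1 : (⟨a.val - 1, by omega⟩ : Fin d).succ = a := Fin.ext (by simp; omega)
  have e2 : (⟨j.val, by omega⟩ : Fin d).castSucc = j := rfl
  have e3 : (⟨k.val, hk⟩ : Fin d).castSucc = k := rfl
  rw [e1, e2, e3]
  refine ⟨_, (tsub_add_cancel_of_le ?_).symm⟩
  intro c
  simp only [Finsupp.coe_tsub, Pi.sub_apply, Finsupp.coe_add, Pi.add_apply,
    Finsupp.single_apply] at h2 ⊢
  have hka : k ≠ a := fun h => by subst h; omega
  have hkj : k ≠ j := fun h => by subst h; omega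
  by_cases hck : k = c
  · subst hck
    rw [if_neg hka.symm, if_neg hkj.symm, if_pos rfl]
    omega
  · rw [if_neg hck]
    by_cases hcj : j = c
    · subst hcj
      rw [if_pos rfl]
      omega
    · rw [if_neg hcj]
      by_cases hca : a = c
      · subst hca
        rw [if_pos rfl]
        omega
      · rw [if_neg hca]
        omega

lemma gamma_std_or {d n : ℕ} (hd : 1 ≤ d) (s : Fin (d + 1) →₀ ℕ) (hs : s.degree = n) :
    (∃ p : GPar d, p.Valid n ∧ p.mon = s) ∨
      ∃ i j k : Fin d, i < j ∧ j < k ∧ ∃ t : Fin (d + 1) →₀ ℕ,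
        s = t + (Finsupp.single i.succ 1 + Finsupp.single j.castSucc 1
          + Finsupp.single k.castSucc 1) := by
  classical
  have key : ∀ p : GPar d, p.mon = s → p.A + p.B + p.e + p.g = n := by
    intro p hp
    rw [← GPar.degree_mon, hp, hs]
  have h0l : (0 : Fin (d + 1)) ≠ Fin.last d := by
    intro h
    have := congrArg Fin.val h
    simp at this
    omega
  have hcase : ∀ c : Fin (d + 1), c = 0 ∨ c = Fin.last d ∨ (0 < c.val ∧ c.val < d) := by
    intro c
    simp only [Fin.ext_iff, Fin.val_zero, Fin.val_last]
    omega
  by_cases h : ∃ c : Fin (d + 1), 0 < c.val ∧ c.val < d ∧ s c ≠ 0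
  swap
  · left
    push Not at h
    have hm : (⟨s 0, s (Fin.last d), 0, 0, 0, 0⟩ : GPar d).mon = s := by
      ext c
      simp only [GPar.mon, Finsupp.coe_add, Pi.add_apply, Finsupp.single_apply]
      rcases hcase c with rfl | rfl | hc
      · simp [h0l.symm]
      · simp [h0l]
      · rw [h c hc.1 hc.2, if_neg, if_neg] <;> simp [Fin.ext_iff] <;> omega
    refine ⟨_, ⟨key _ hm, ?_⟩, hm⟩
    simp
  · obtain ⟨c, hc⟩ := h
    obtain ⟨k, hk, hmax⟩ := Finset.exists_max_image
      (Finset.univ.filter (fun c : Fin (d + 1) => 0 < c.val ∧ c.val < d ∧ s c ≠ 0))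
      (fun c => c.val) ⟨c, by simpa using hc⟩
    simp only [Finset.mem_filter, Finset.mem_univ, true_and] at hk hmax
    obtain ⟨hk0, hkd, hsk⟩ := hk
    have hbig : ∀ c : Fin (d + 1), c.val < d → k.val < c.val → s c = 0 := by
      intro c h1 h2
      by_contra h3
      have := hmax c ⟨by omega, h1, h3⟩
      omega
    have hk00 : k ≠ 0 := fun h => by simp [h] at hk0
    have hkl : k ≠ Fin.last d := fun h => by simp [h] at hkd
    by_cases h2 : ∃ a : Fin (d + 1), 0 < a.val ∧ a.val < k.val ∧ s a ≠ 0
    swap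
    · left
      push Not at h2
      have hz : ∀ c : Fin (d + 1), c ≠ 0 → c ≠ Fin.last d → c ≠ k → s c = 0 := by
        intro c h3 h4 h5
        have h5' : c.val ≠ k.val := fun h => h5 (Fin.ext h)
        rcases hcase c with h | h | h
        · exact absurd h h3
        · exact absurd h h4
        · rcases lt_or_gt_of_ne h5' with h6 | h6
          · exact h2 c h.1 h6
          · exact hbig c h.2 h6
      by_cases hs1 : s k = 1
      · have hm : (⟨s 0, s (Fin.last d), 1, 0, k, 0⟩ : GPar d).mon = s := by
          ext c
          simp only [GPar.mon, Finsupp.coe_add, Pi.add_apply, Finsupp.single_apply]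
          by_cases c0 : 0 = c
          · subst c0; simp [h0l.symm, hk00]
          by_cases cl : Fin.last d = c
          · subst cl; simp [h0l, hkl]
          by_cases ck : k = c
          · subst ck; simp [hk00.symm, hkl.symm, hs1]
          · simp [c0, cl, ck, hz c (Ne.symm c0) (Ne.symm cl) (Ne.symm ck)]
        refine ⟨_, ⟨key _ hm, ?_⟩, hm⟩
        right; left
        simp; omega
      · have hm : (⟨s 0, s (Fin.last d), s k - 1, 1, k, k⟩ : GPar d).mon = s := by
          ext c
          simp only [GPar.mon, Finsupp.coe_add, Pi.add_apply, Finsupp.single_apply]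
          by_cases c0 : 0 = c
          · subst c0; simp [h0l.symm, hk00]
          by_cases cl : Fin.last d = c
          · subst cl; simp [h0l, hkl]
          by_cases ck : k = c
          · subst ck; simp [hk00.symm, hkl.symm]; omega
          · simp [c0, cl, ck, hz c (Ne.symm c0) (Ne.symm cl) (Ne.symm ck)]
        refine ⟨_, ⟨key _ hm, ?_⟩, hm⟩
        refine Or.inr (Or.inr ⟨?_, ?_, ?_, ?_, ?_, ?_⟩) <;> first | rfl | (simp only; omega)
    · obtain ⟨a, ha0, hak, hsa⟩ := h2
      have ha00 : a ≠ 0 := fun h => by simp [h] at ha0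
      have hal : a ≠ Fin.last d := fun h => by simp [h] at hak; omega
      have hakne : a ≠ k := fun h => by simp [h] at hak
      by_cases h3 : ∃ j : Fin (d + 1), 0 < j.val ∧ j.val < k.val ∧ (s - Finsupp.single a 1 : Fin (d + 1) →₀ ℕ) j ≠ 0
      · right
        obtain ⟨j, hj0, hjk, hsj⟩ := h3
        rcases le_total a j with haj | haj
        · exact gamma_nonstd s a j k ha0 haj hjk hkd hsa hsj hsk
        · refine gamma_nonstd s j a k hj0 haj hak hkd ?_ ?_ hsk
          · simp only [Finsupp.coe_tsub, Pi.sub_apply] at hsj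
            omega
          · simp only [Finsupp.coe_tsub, Pi.sub_apply, Finsupp.single_apply] at hsj ⊢
            by_cases hja : j = a
            · subst hja; exact hsj
            · rw [if_neg hja]; omega
      · left
        push Not at h3
        have hsa1 : s a = 1 := by
          have := h3 a ha0 hak
          simp at this
          omega
        have hz : ∀ c : Fin (d + 1), c ≠ 0 → c ≠ Fin.last d → c ≠ k → c ≠ a → s c = 0 := by
          intro c h3' h4 h5 h6
          have h5' : c.val ≠ k.val := fun h => h5 (Fin.ext h)
          rcases hcase c with h | h | h
          · exact absurd h h3'
          · exact absurd h h4
          · rcases lt_or_gt_of_ne h5' with h7 | h7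
            · have := h3 c h.1 h7
              simpa [Finsupp.single_apply, h6.symm] using this
            · exact hbig c h.2 h7
        have hm : (⟨s 0, s (Fin.last d), s k, 1, k, a⟩ : GPar d).mon = s := by
          ext c
          simp only [GPar.mon, Finsupp.coe_add, Pi.add_apply, Finsupp.single_apply]
          by_cases c0 : 0 = c
          · subst c0; simp [h0l.symm, hk00, ha00]
          by_cases cl : Fin.last d = c
          · subst cl; simp [h0l, hkl, hal]
          by_cases ck : k = c
          · subst ck; simp [hk00.symm, hkl.symm, hakne]
          by_cases ca : a = c
          · subst ca; simp [ha00.symm, hal.symm, hakne.symm, hsa1]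
          · simp [c0, cl, ck, ca, hz c (Ne.symm c0) (Ne.symm cl) (Ne.symm ck) (Ne.symm ca)]
        refine ⟨_, ⟨key _ hm, ?_⟩, hm⟩
        refine Or.inr (Or.inr ⟨?_, ?_, ?_, ?_, ?_, ?_⟩) <;> first | rfl | (simp only; omega)

/-- quadratic weight -/
noncomputable def gQ {d : ℕ} : (Fin (d + 1) →₀ ℕ) →+ ℕ :=
  Finsupp.liftAddHom (fun c => AddMonoidHom.mulRight (c.val * c.val))

lemma gQ_single {d : ℕ} (c : Fin (d + 1)) : gQ (Finsupp.single c 1) = c.val * c.val := by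
  simp [gQ]

lemma gQ_le {d : ℕ} (s : Fin (d + 1) →₀ ℕ) : gQ s ≤ s.degree * (d * d) := by
  simp only [gQ, Finsupp.liftAddHom_apply, Finsupp.sum, AddMonoidHom.coe_mulRight,
    Finsupp.degree_apply, Finset.sum_mul]
  refine Finset.sum_le_sum fun c _ => ?_
  have : c.val ≤ d := by omega
  gcongr

lemma gamma_rel {d : ℕ} (i j k : Fin d) (hij : i < j) (hjk : j < k)
    (t : Fin (d + 1) →₀ ℕ) :
    ∃ u v : ℂ, monomial (t + (Finsupp.single i.succ 1 + Finsupp.single j.castSucc 1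
          + Finsupp.single k.castSucc 1)) (1 : ℂ)
      - (u • monomial (t + (Finsupp.single i.castSucc 1 + Finsupp.single j.succ 1
          + Finsupp.single k.castSucc 1)) (1 : ℂ)
        + v • monomial (t + (Finsupp.single i.castSucc 1 + Finsupp.single j.castSucc 1
          + Finsupp.single k.succ 1)) (1 : ℂ)) ∈ gammaIdeal d := by
  have hmem : ((gammaMatrix d).submatrix id ![i, j, k]).det ∈ gammaIdeal d := by
    refine Ideal.subset_span ⟨![i, j, k], ?_, rfl⟩
    intro x y hxy
    fin_cases x <;> fin_cases y <;> simp at hxy ⊢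
    · exact hij
    · exact hij.trans hjk
    · exact hjk
  rw [gamma_det] at hmem
  simp only [Matrix.cons_val_zero, Matrix.cons_val_one, Matrix.cons_val] at hmem
  have hne : (j : ℂ) - (k : ℂ) ≠ 0 := by
    rw [sub_ne_zero]
    intro h
    have := Nat.cast_injective h
    have := Fin.lt_def.mp hjk
    omega
  set r : ℂ := ((j : ℂ) - (k : ℂ))⁻¹ with hr
  refine ⟨-(r * ((k : ℂ) - (i : ℂ))), -(r * ((i : ℂ) - (j : ℂ))), ?_⟩
  have h2 := Ideal.mul_mem_left _ (C r * monomial t (1 : ℂ)) hmem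
  convert h2 using 1
  have hm : ∀ x y z : Fin (d + 1), monomial (t + (Finsupp.single x 1 + Finsupp.single y 1
      + Finsupp.single z 1)) (1 : ℂ) = monomial t 1 * (X x * X y * X z) := by
    intro x y z
    simp only [X, monomial_mul, mul_one]
  have hrC : (C r : MvPolynomial (Fin (d + 1)) ℂ) * C ((j : ℂ) - (k : ℂ)) = 1 := by
    rw [← C_mul, hr, inv_mul_cancel₀ hne, C_1]
  simp only [hm, smul_eq_C_mul, C_neg, C_mul]
  linear_combination (-(monomial t 1 * (X i.succ * X j.castSucc * X k.castSucc))) * hrC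

lemma gamma_span {d n : ℕ} (hd : 1 ≤ d) (s : Fin (d + 1) →₀ ℕ) (hs : s.degree = n) :
    monomial s (1 : ℂ) ∈ Submodule.span ℂ (Set.range fun i : GIdx d n => monomial i.par.mon (1 : ℂ))
      ⊔ Submodule.restrictScalars ℂ (gammaIdeal d) := by
  induction hN : n * (d * d) - gQ s using Nat.strong_induction_on generalizing s with
  | _ N ih =>
  rcases gamma_std_or hd s hs with ⟨p, hp, rfl⟩ | ⟨i, j, k, hij, hjk, t, rfl⟩
  · obtain ⟨i, rfl⟩ := GIdx.par_surj p hp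
    exact Submodule.mem_sup_left (Submodule.subset_span ⟨i, rfl⟩)
  · have hij' := Fin.lt_def.mp hij
    have hjk' := Fin.lt_def.mp hjk
    obtain ⟨u, v, huv⟩ := gamma_rel i j k hij hjk t
    have hle := gQ_le (t + (Finsupp.single i.castSucc 1 + Finsupp.single j.succ 1
          + Finsupp.single k.castSucc 1))
    have hle2 := gQ_le (t + (Finsupp.single i.castSucc 1 + Finsupp.single j.castSucc 1
          + Finsupp.single k.succ 1))
    have hd1 : (t + (Finsupp.single i.castSucc 1 + Finsupp.single j.succ 1
          + Finsupp.single k.castSucc 1)).degree = n := by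
      rw [← hs]; simp
    have hd2 : (t + (Finsupp.single i.castSucc 1 + Finsupp.single j.castSucc 1
          + Finsupp.single k.succ 1)).degree = n := by
      rw [← hs]; simp
    rw [hd1] at hle
    rw [hd2] at hle2
    have m1 := ih _ ?_ _ hd1 rfl
    have m2 := ih _ ?_ _ hd2 rfl
    · have m3 := Submodule.add_mem _ (Submodule.mem_sup_right
        (S := Submodule.span ℂ (Set.range fun i : GIdx d n => monomial i.par.mon (1 : ℂ)))
        (T := Submodule.restrictScalars ℂ (gammaIdeal d)) huv)
        (Submodule.add_mem _ (Submodule.smul_mem _ u m1) (Submodule.smul_mem _ v m2))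
      rwa [sub_add_cancel] at m3
    · simp only [map_add, gQ_single, Fin.val_succ, Fin.val_castSucc] at hN hle hle2 ⊢
      have e1 : ∀ x : ℕ, (x + 1) * (x + 1) = x * x + 2 * x + 1 := fun x => by ring
      simp only [e1] at hN hle hle2 ⊢
      omega
    · simp only [map_add, gQ_single, Fin.val_succ, Fin.val_castSucc] at hN hle hle2 ⊢
      have e1 : ∀ x : ℕ, (x + 1) * (x + 1) = x * x + 2 * x + 1 := fun x => by ring
      simp only [e1] at hN hle hle2 ⊢
      omega

/-- The Hilbert function of `S/I₃(G)`: the `n`-th graded piece `Sₙ/Iₙ` has dimension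
`C(n+2,2) + (d-2)·C(n+1,2) + C(d-1,2)·C(n,2)`. -/
theorem gamma_hilbertFunction (d : ℕ) (hd : 3 ≤ d) (n : ℕ) :
    Module.finrank ℂ
      (↥(homogeneousSubmodule (Fin (d + 1)) ℂ n) ⧸
        (Submodule.comap (homogeneousSubmodule (Fin (d + 1)) ℂ n).subtype
          (Submodule.restrictScalars ℂ (gammaIdeal d)))) =
      Nat.choose (n + 2) 2 + (d - 2) * Nat.choose (n + 1) 2
        + Nat.choose (d - 1) 2 * Nat.choose n 2 := by
  have hd1 : 1 ≤ d := by omega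
  have hhom : ∀ i : GIdx d n, monomial i.par.mon (1 : ℂ) ∈ homogeneousSubmodule (Fin (d + 1)) ℂ n := by
    intro i
    refine isHomogeneous_monomial _ ?_
    rw [GPar.degree_mon]
    exact i.par_valid.1
  set N := Submodule.comap (homogeneousSubmodule (Fin (d + 1)) ℂ n).subtype
          (Submodule.restrictScalars ℂ (gammaIdeal d)) with hN
  let bv : GIdx d n → homogeneousSubmodule (Fin (d + 1)) ℂ n := fun i => ⟨_, hhom i⟩
  let b : GIdx d n → (homogeneousSubmodule (Fin (d + 1)) ℂ n ⧸ N) := fun i => N.mkQ (bv i)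
  let F : (homogeneousSubmodule (Fin (d + 1)) ℂ n ⧸ N) →ₗ[ℂ] Polynomial (Polynomial ℂ) :=
    N.liftQ ((gPhi d).toLinearMap ∘ₗ (homogeneousSubmodule (Fin (d + 1)) ℂ n).subtype)
      (fun x hx => gPhi_ideal d hx)
  have hli : LinearIndependent ℂ b := by
    refine LinearIndependent.of_comp F ?_
    exact gamma_li hd1 (fun i : GIdx d n => i.par) (fun i => i.par_valid) GIdx.par_inj
  have hsp : ⊤ ≤ Submodule.span ℂ (Set.range b) := by
    rintro y -
    obtain ⟨⟨x, hx⟩, rfl⟩ := N.mkQ_surjective y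
    have hxW : x ∈ Submodule.span ℂ (Set.range fun i : GIdx d n => monomial i.par.mon (1 : ℂ))
        ⊔ Submodule.restrictScalars ℂ (gammaIdeal d) := by
      rw [x.as_sum]
      refine Submodule.sum_mem _ fun s hs => ?_
      have hdeg : s.degree = n := by
        have := hx (mem_support_iff.mp hs)
        rwa [Finsupp.degree_eq_weight_one]
      have := Submodule.smul_mem _ (coeff s x) (gamma_span hd1 s hdeg)
      rwa [smul_monomial, smul_eq_mul, mul_one] at this
    obtain ⟨u, hu, v, hv, huv⟩ := Submodule.mem_sup.mp hxW
    have hr : Set.range (fun i : GIdx d n => monomial i.par.mon (1 : ℂ)) =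
        Set.image (homogeneousSubmodule (Fin (d + 1)) ℂ n).subtype (Set.range bv) := by
      rw [← Set.range_comp]
      rfl
    rw [hr, Submodule.span_image] at hu
    obtain ⟨u', hu', rfl⟩ := hu
    have he : N.mkQ ⟨x, hx⟩ = N.mkQ u' := by
      rw [← sub_eq_zero, ← map_sub, Submodule.mkQ_apply, Submodule.Quotient.mk_eq_zero, hN,
        Submodule.mem_comap, map_sub]
      have : (homogeneousSubmodule (Fin (d + 1)) ℂ n).subtype ⟨x, hx⟩ = x := rfl
      rw [this, ← huv, add_sub_cancel_left]
      exact hv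
    rw [he]
    have hb : Set.range b = Set.image N.mkQ (Set.range bv) := by
      rw [← Set.range_comp]
      rfl
    rw [hb, Submodule.span_image]
    exact ⟨u', hu', rfl⟩
  rw [Module.finrank_eq_card_basis (Module.Basis.mk hli hsp), GIdx.card d n hd]
end
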